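/- arXiv:2103.03452 — 7 statements merged into one kernel-verified Lean document; each statement's English description precedes it below -/
import Mathlib

section
/- One-step expected descent for FedDR (Lemma A.6). Fix γ₁, γ₄ > 0 and stepsizes 0 < α < min{8, √(17+64γ₄) − 1}/(4(1+4γ₄)) and 0 < η < (√((4−α)² − 16α²γ₄(1+4γ₄)) − α)/(4L(1+2αγ₄)). Suppose the current state (y_i, z_i, x_i, e_i)_{i=1}^n and x̄ ∈ dom g satisfy y_i = z_i + η∇f_i(z_i), x_i = z_i + e_i, ‖e_i‖ ≤ ε_i for all i. Let S be a random subset of {1,…,n} with P(i ∈ S) = p_i ≥ p̂ > 0 for all i, and define the (random) next state by: for i ∈ S, y'_i = y_i + α(x̄ − x_i), z'_i = prox_{ηf_i}(y'_i), x'_i = z'_i + e'_i with ‖e'_i‖ ≤ ε'_i almost surely; for i ∉ S, (y'_i, z'_i, x'_i, e'_i) = (y_i, z_i, x_i, e_i) and ε'_i ≥ ‖e_i‖; and x̄' = prox_{ηg}((1/n)Σ_{i=1}^n (2x'_i − y'_i)). Let β := p̂α[2 − α(Lη+1) − 2L²η² − 4γ₄α(1+L²η²)]/(2η(1+γ₁)(1+L²η²)),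 ρ₂ := 2(1+ηL)²/(γ₄ηα²) + (1+η²L²)/η + α[2 − α(Lη+1) − 2L²η² − 4αγ₄(1+L²η²)]/(2η(1+L²η²)γ₁), ρ₁ := ρ₂ + (1+η²L²)/η. Then (β/(2n)) Σ_{i=1}^n ‖x̄ − x_i‖² ≤ V_η(x̄; x₁,…,xₙ) − E[V_η(x̄'; x'₁,…,x'ₙ)] + (1/n) Σ_{i=1}^n (ρ₁ ε_i² + ρ₂ (ε'_i)²). -/
open MeasureTheory
open scoped RealInnerProductSpace

/-!
Completing the square in `w`, `f(x) + ⟪∇f(x), w - x⟫ + ‖w - x‖² / (2η)` is `‖w - a‖² / (2η)` up to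
a constant, where `a = x - η∇f(x)`. If `x` were exactly `prox_{ηf}(y)`, then `a` would be the
reflected point `2x - y`, so the server minimizes exactly the Lyapunov function in `w`; an inexact
`x` shifts `a` by the stationarity residual `x + η∇f(x) - y`, and the strong convexity of the
proximal objective absorbs that shift up to the square of the residual.

For an active user write `d = x' - x`, `v = η(∇f(x') - ∇f(x))` and let `ξ` be the difference of the
two residuals. Then `α(x̄ - x) = d + v + ξ`, and the descent lemma bounds the decrease of the user's
term from below by `⟪d + v + ξ, d - v⟫ / (αη)` minus a multiple of `‖d‖²`. As `‖v‖ ≤ Lη‖d‖`, this is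
a quadratic form in `‖d‖` and `‖ξ‖` which dominates `‖d + v + ξ‖²`, up to `‖ξ‖²`. Averaging over the
random active set costs the factor `p̂`.
-/

section ConvexAnalysis

variable {E : Type*} [NormedAddCommGroup E]

lemma add_sq_norm_le_of_isMinOn_of_strongConvexOn [NormedSpace ℝ E] {s : Set E} {h : E → ℝ}
    {m : ℝ} (hh : StrongConvexOn s m h) {p w : E} (hp : p ∈ s) (hw : w ∈ s)
    (hmin : IsMinOn h s p) : h p + m / 2 * ‖w - p‖ ^ 2 ≤ h w := by
  have hsegment : ∀ t ∈ Set.Ioo (0 : ℝ) 1, h p + (1 - t) * (m / 2 * ‖w - p‖ ^ 2) ≤ h w := by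
    rintro t ⟨ht0, ht1⟩
    have hconv := hh.2 hw hp ht0.le (sub_nonneg.2 ht1.le) (add_sub_cancel t 1)
    have hle : h p ≤ h (t • w + (1 - t) • p) :=
      hmin (hh.1 hw hp ht0.le (sub_nonneg.2 ht1.le) (add_sub_cancel t 1))
    simp only [smul_eq_mul] at hconv
    refine le_of_mul_le_mul_left ?_ ht0
    linarith
  have hlim : Filter.Tendsto (fun t : ℝ => h p + (1 - t) * (m / 2 * ‖w - p‖ ^ 2))
      (nhdsWithin 0 (Set.Ioi 0)) (nhds (h p + (1 - 0) * (m / 2 * ‖w - p‖ ^ 2))) :=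
    (Continuous.tendsto (by fun_prop) 0).mono_left nhdsWithin_le_nhds
  rw [sub_zero, one_mul] at hlim
  exact le_of_tendsto hlim (Filter.mem_of_superset (Ioo_mem_nhdsGT one_pos) hsegment)

variable [InnerProductSpace ℝ E]

lemma strongConvexOn_add_mul_norm_sub_sq {s : Set E} {h : E → ℝ} (hh : ConvexOn ℝ s h) (m : ℝ)
    (u : E) : StrongConvexOn s m fun w => h w + m / 2 * ‖w - u‖ ^ 2 := by
  refine strongConvexOn_iff_convex.2 ⟨hh.1, fun w hw v hv a b ha hb hab => ?_⟩
  have hconv := hh.2 hw hv ha hb hab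
  obtain rfl := eq_sub_of_add_eq hab
  simp only [norm_sub_sq_real, inner_add_left, real_inner_smul_left, smul_eq_mul] at hconv ⊢
  linarith

lemma abs_sub_sub_inner_gradient_le [CompleteSpace E] {f : E → ℝ} (hf : Differentiable ℝ f)
    {L : ℝ} {a : E} (hlip : ∀ u, ‖gradient f u - gradient f a‖ ≤ L * ‖u - a‖) (b : E) :
    |f b - f a - ⟪gradient f a, b - a⟫| ≤ L / 2 * ‖b - a‖ ^ 2 := by
  set v := b - a with hv
  have hderiv (t : ℝ) : HasDerivAt (fun t : ℝ => f (a + t • v) - f a - t * ⟪gradient f a, v⟫)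
      ⟪gradient f (a + t • v) - gradient f a, v⟫ t := by
    have hline : HasDerivAt (fun t : ℝ => a + t • v) v t := by
      simpa using ((hasDerivAt_id t).smul_const v).const_add a
    have hcomp := (hf (a + t • v)).hasGradientAt.hasFDerivAt.comp_hasDerivAt t hline
    rw [inner_sub_left]
    exact (hcomp.sub_const (f a)).sub (by simpa using (hasDerivAt_id t).mul_const ⟪gradient f a, v⟫)
  have hbound (t : ℝ) : HasDerivAt (fun t : ℝ => L / 2 * ‖v‖ ^ 2 * t ^ 2) (L * t * ‖v‖ ^ 2) t :=
    ((hasDerivAt_pow 2 t).const_mul (L / 2 * ‖v‖ ^ 2)).congr_deriv (by push_cast; ring)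
  have hle (t : ℝ) (ht : t ∈ Set.Ico (0 : ℝ) 1) :
      ‖⟪gradient f (a + t • v) - gradient f a, v⟫‖ ≤ L * t * ‖v‖ ^ 2 := by
    have hgrad := hlip (a + t • v)
    rw [add_sub_cancel_left, norm_smul, Real.norm_of_nonneg ht.1] at hgrad
    calc ‖⟪gradient f (a + t • v) - gradient f a, v⟫‖
        ≤ ‖gradient f (a + t • v) - gradient f a‖ * ‖v‖ := norm_inner_le_norm _ _
      _ ≤ L * (t * ‖v‖) * ‖v‖ := by gcongr
      _ = L * t * ‖v‖ ^ 2 := by ring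
  simpa [hv] using image_norm_le_of_norm_deriv_right_le_deriv_boundary (a := 0) (b := 1)
    (fun t _ => (hderiv t).continuousAt.continuousWithinAt)
    (fun t _ => (hderiv t).hasDerivWithinAt) (by simp) hbound hle
    (Set.right_mem_Icc.2 zero_le_one)

lemma norm_sub_sq_sub_norm_sub_sq (p w c : E) :
    ‖p - c‖ ^ 2 - ‖w - c‖ ^ 2 = ‖p‖ ^ 2 - ‖w‖ ^ 2 - 2 * ⟪c, p - w⟫ := by
  rw [norm_sub_sq_real, norm_sub_sq_real, inner_sub_right, real_inner_comm c p,
    real_inner_comm c w]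
  ring

lemma sum_mul_norm_sub_sq_sub {ι : Type*} [Fintype ι] {θ : ι → ℝ} (hθ : ∑ i, θ i = 1)
    (c : ι → E) (p w : E) :
    ∑ i, θ i * (‖p - c i‖ ^ 2 - ‖w - c i‖ ^ 2)
      = ‖p - ∑ i, θ i • c i‖ ^ 2 - ‖w - ∑ i, θ i • c i‖ ^ 2 := by
  simp only [norm_sub_sq_sub_norm_sub_sq, mul_sub (θ _), Finset.sum_sub_distrib,
    ← Finset.sum_mul, hθ, one_mul, sum_inner, real_inner_smul_left, Finset.mul_sum,
    mul_left_comm (θ _) 2]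

end ConvexAnalysis

section QuadraticForms

lemma mul_add_sq_add_le {b k : ℝ} (hb : 0 ≤ b) (hk : 0 < k) (hbk : b + 2 * k ≤ 1) (a x : ℝ) :
    b * (a + x) ^ 2 + 2 * a * x ≤ (b + 2 * k) * a ^ 2 + 2 / k * x ^ 2 := by
  have hdisc : (1 + b) ^ 2 + 2 * k * b ≤ 4 := by nlinarith
  have hmul : 0 ≤ 1 / (2 * k) * ((2 * k * a - (1 + b) * x) ^ 2
      + (4 - ((1 + b) ^ 2 + 2 * k * b)) * x ^ 2) := by
    have := mul_nonneg (sub_nonneg.2 hdisc) (sq_nonneg x)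
    positivity
  have hexpand : (b + 2 * k) * a ^ 2 + 2 / k * x ^ 2 - (b * (a + x) ^ 2 + 2 * a * x)
      = 1 / (2 * k) * ((2 * k * a - (1 + b) * x) ^ 2
        + (4 - ((1 + b) ^ 2 + 2 * k * b)) * x ^ 2) := by
    field_simp
    ring
  linarith

variable {E : Type*} [NormedAddCommGroup E] [InnerProductSpace ℝ E]

lemma inner_add_add_sub_ge {l : ℝ} {d v : E} (hv : ‖v‖ ≤ l * ‖d‖) (ξ : E) :
    (1 - l ^ 2) * ‖d‖ ^ 2 - (1 + l) * ‖d‖ * ‖ξ‖ ≤ ⟪d + v + ξ, d - v⟫ := by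
  have hv_sq : ‖v‖ ^ 2 ≤ (l * ‖d‖) ^ 2 := by gcongr
  have hdv : ‖d - v‖ ≤ (1 + l) * ‖d‖ := (norm_sub_le d v).trans (by linarith)
  have hξ : -(‖ξ‖ * ((1 + l) * ‖d‖)) ≤ ⟪ξ, d - v⟫ :=
    (neg_le_neg (by gcongr)).trans (abs_le.1 (abs_real_inner_le_norm ξ (d - v))).1
  have hmain : ⟪d + v, d - v⟫ = ‖d‖ ^ 2 - ‖v‖ ^ 2 := by
    rw [inner_add_left, inner_sub_right, inner_sub_right, real_inner_self_eq_norm_sq,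
      real_inner_self_eq_norm_sq, real_inner_comm]
    ring
  rw [inner_add_left, hmain]
  linarith

lemma norm_add_add_sq_le_inner_add {l b c k : ℝ} (hb : 0 ≤ b) (hc : 0 ≤ c)
    (hk : 0 < k) (hbal : c + 2 * (1 + l ^ 2) * (b + 2 * k) ≤ 2 * (1 - l ^ 2))
    {d v : E} (hv : ‖v‖ ≤ l * ‖d‖) (ξ : E) :
    b * ‖d + v + ξ‖ ^ 2 + c * ‖d‖ ^ 2 ≤ 2 * ⟪d + v + ξ, d - v⟫ + 2 / k * ‖ξ‖ ^ 2 := by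
  have hbk : b + 2 * k ≤ 1 := by nlinarith [mul_nonneg (sq_nonneg l) (add_nonneg hb hk.le)]
  have hnorm : ‖d + v + ξ‖ ≤ (1 + l) * ‖d‖ + ‖ξ‖ := norm_add₃_le.trans (by linarith)
  have hl_sq : (1 + l) ^ 2 ≤ 2 * (1 + l ^ 2) := by linarith [sq_nonneg (1 - l)]
  have hupper : b * ‖d + v + ξ‖ ^ 2 ≤ b * ((1 + l) * ‖d‖ + ‖ξ‖) ^ 2 := by gcongr
  have hform := mul_add_sq_add_le hb hk hbk ((1 + l) * ‖d‖) ‖ξ‖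
  have hscale : (b + 2 * k) * ((1 + l) * ‖d‖) ^ 2 ≤ (b + 2 * k) * (2 * (1 + l ^ 2) * ‖d‖ ^ 2) := by
    rw [mul_pow]
    gcongr
  have hbal' := mul_le_mul_of_nonneg_right hbal (sq_nonneg ‖d‖)
  have hlower := inner_add_add_sub_ge hv ξ
  linarith

end QuadraticForms

section RandomSubset

variable {Ω ι F : Type*}

lemma sum_mem_eq_sum_indicator [Fintype ι] [AddCommMonoid F] (S : Ω → Finset ι) (a : ι → F)
    (ω : Ω) : ∑ i ∈ S ω, a i = ∑ i, {ω | i ∈ S ω}.indicator (fun _ => a i) ω := by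
  classical
  simp only [Set.indicator_apply, Set.mem_ofPred_eq, Finset.sum_ite_mem, Finset.univ_inter]

variable [MeasurableSpace Ω] {μ : Measure Ω} [IsFiniteMeasure μ] [NormedAddCommGroup F]
  {S : Ω → Finset ι}

lemma integrable_sum_mem [Finite ι] (hS : ∀ i, MeasurableSet {ω | i ∈ S ω}) (a : ι → F) :
    Integrable (fun ω => ∑ i ∈ S ω, a i) μ := by
  cases nonempty_fintype ι
  simp only [sum_mem_eq_sum_indicator S]
  exact integrable_finsetSum _ fun i _ => (integrable_const (a i)).indicator (hS i)

lemma integral_sum_mem [Fintype ι] [NormedSpace ℝ F] [CompleteSpace F]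
    (hS : ∀ i, MeasurableSet {ω | i ∈ S ω}) (a : ι → F) :
    ∫ ω, ∑ i ∈ S ω, a i ∂μ = ∑ i, μ.real {ω | i ∈ S ω} • a i := by
  simp only [sum_mem_eq_sum_indicator S]
  rw [integral_finsetSum _ fun i _ => (integrable_const (a i)).indicator (hS i)]
  exact Finset.sum_congr rfl fun i _ => integral_indicator_const (a i) (hS i)

end RandomSubset

section FedDR

variable {E : Type*} [NormedAddCommGroup E] [InnerProductSpace ℝ E]

/-- The function `w ↦ h(w) + ‖w - u‖² / (2η)` whose minimizer over the domain of `h` is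
`prox_{ηh}(u)`. An extended-valued `h` is encoded by its restriction to its domain, on which the
minimization is then carried out. -/
noncomputable def proxObjective (η : ℝ) (h : E → ℝ) (u w : E) : ℝ :=
  h w + 1 / (2 * η) * ‖w - u‖ ^ 2

lemma proxObjective_add_norm_sub_sq_le {η : ℝ} {s : Set E} {h : E → ℝ}
    (hh : ConvexOn ℝ s h) {u p w : E} (hp : p ∈ s) (hw : w ∈ s)
    (hmin : IsMinOn (proxObjective η h u) s p) :
    proxObjective η h u p + 1 / (2 * η) * ‖w - p‖ ^ 2 ≤ proxObjective η h u w := by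
  have hconv : StrongConvexOn s (1 / η) (proxObjective η h u) := by
    simpa only [div_div, mul_comm η 2] using! strongConvexOn_add_mul_norm_sub_sq hh (1 / η) u
  have hgrowth := add_sq_norm_le_of_isMinOn_of_strongConvexOn hconv hp hw hmin
  rwa [div_div, mul_comm η 2] at hgrowth

variable [CompleteSpace E]

/-- The user's term `f(x) + ⟪∇f(x), w - x⟫ + ‖w - x‖² / (2η)` of the Lyapunov function, as a
function of the server variable `w`. -/
noncomputable def quadraticModel (η : ℝ) (f : E → ℝ) (x w : E) : ℝ :=
  f x + ⟪gradient f x, w - x⟫ + 1 / (2 * η) * ‖w - x‖ ^ 2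

/-- The residual of `x` in the equation `x + η∇f(x) = y` satisfied by `x = prox_{ηf}(y)`. -/
noncomputable def proxResidual (η : ℝ) (f : E → ℝ) (x y : E) : E :=
  x + η • gradient f x - y

/-- The Lyapunov function `V_η(w; x) = g(w) + ∑ᵢ θᵢ (fᵢ(xᵢ) + ⟪∇fᵢ(xᵢ), w - xᵢ⟫ + ‖w - xᵢ‖² / (2η))`
with general weights `θᵢ` in place of `1 / n`. -/
noncomputable def lyapunov {ι : Type*} [Fintype ι] (η : ℝ) (θ : ι → ℝ) (g : E → ℝ)
    (f : ι → E → ℝ) (w : E) (x : ι → E) : ℝ :=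
  g w + ∑ i, θ i * quadraticModel η (f i) (x i) w

/-- The quantity whose positivity the stepsize conditions on `α` and `η` guarantee. -/
def stepsizeMargin (L η α γ : ℝ) : ℝ :=
  2 - α * (L * η + 1) - 2 * L ^ 2 * η ^ 2 - 4 * γ * α * (1 + L ^ 2 * η ^ 2)

/-- The coefficient of `‖x̄ - x‖² / 2` in the decrease of an active user's term. -/
noncomputable def descentRate (L η α γ : ℝ) : ℝ :=
  α * stepsizeMargin L η α γ / (2 * η * (1 + L ^ 2 * η ^ 2))

/-- The coefficient with which the squared errors of an active user enter the descent estimate. -/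
noncomputable def userErrorFactor (L η α γ : ℝ) : ℝ :=
  2 * (1 + η * L) ^ 2 / (γ * η * α ^ 2)

variable {ι : Type*} [Fintype ι] {L η α γ : ℝ} {f : E → ℝ}

lemma hasGradientAt_proxObjective {u w : E} (hf : DifferentiableAt ℝ f w) :
    HasGradientAt (proxObjective η f u) (gradient f w + (1 / η) • (w - u)) w := by
  have hderiv := hf.hasGradientAt.hasFDerivAt.add
    (((hasFDerivAt_id (𝕜 := ℝ) w).sub_const u).norm_sq.const_mul (1 / (2 * η)))
  refine hasGradientAt_iff_hasFDerivAt.2 (hderiv.congr_fderiv ?_)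
  ext v
  simp only [add_apply, smul_apply,
    ContinuousLinearMap.comp_apply, ContinuousLinearMap.id_apply, innerSL_apply_apply,
    InnerProductSpace.toDual_apply_apply, inner_add_left, real_inner_smul_left, smul_eq_mul,
    nsmul_eq_mul, id_eq]
  ring

lemma proxResidual_eq_zero_of_isLocalMin (hη : η ≠ 0) {y z : E} (hf : DifferentiableAt ℝ f z)
    (hmin : IsLocalMin (proxObjective η f y) z) : proxResidual η f z y = 0 := by
  have hgrad : gradient f z + (1 / η) • (z - y) = 0 :=
    (map_eq_zero_iff _ (InnerProductSpace.toDual ℝ E).injective).1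
      (hmin.hasFDerivAt_eq_zero (hasGradientAt_proxObjective hf).hasFDerivAt)
  have hsmul : η • (gradient f z + (1 / η) • (z - y)) = proxResidual η f z y := by
    rw [smul_add, smul_smul, mul_one_div_cancel hη, one_smul, proxResidual]
    abel
  rw [← hsmul, hgrad, smul_zero]

lemma norm_proxResidual_le (hL : 0 ≤ L) (hη : 0 ≤ η) {x y z : E} {ε : ℝ}
    (hlip : ∀ u v, ‖gradient f u - gradient f v‖ ≤ L * ‖u - v‖) (hz : proxResidual η f z y = 0)
    (hx : ‖x - z‖ ≤ ε) : ‖proxResidual η f x y‖ ≤ (1 + η * L) * ε := by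
  have hsub : proxResidual η f x y = (x - z) + η • (gradient f x - gradient f z) := by
    rw [← sub_zero (proxResidual η f x y), ← hz, proxResidual, proxResidual]
    module
  calc ‖proxResidual η f x y‖ ≤ ‖x - z‖ + η * ‖gradient f x - gradient f z‖ := by
        rw [hsub, ← norm_smul_of_nonneg hη]
        exact norm_add_le _ _
    _ ≤ ‖x - z‖ + η * (L * ‖x - z‖) := by gcongr; exact hlip x z
    _ = (1 + η * L) * ‖x - z‖ := by ring
    _ ≤ (1 + η * L) * ε := by gcongr

lemma quadraticModel_le_add_norm_sub_sq (hη : 0 < η) (x y p w : E) :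
    quadraticModel η f x p ≤ quadraticModel η f x w
      + 1 / (2 * η) * (‖p - ((2 : ℝ) • x - y)‖ ^ 2 - ‖w - ((2 : ℝ) • x - y)‖ ^ 2
        + ‖w - p‖ ^ 2 + ‖proxResidual η f x y‖ ^ 2) := by
  set δ := proxResidual η f x y with hδ
  have hcenter : ((2 : ℝ) • x - y : E) = x - η • gradient f x + δ := by
    rw [hδ, proxResidual]
    module
  have hmodel : quadraticModel η f x p - quadraticModel η f x w
      = 1 / (2 * η) * (‖p‖ ^ 2 - ‖w‖ ^ 2 - 2 * ⟪x - η • gradient f x, p - w⟫) := by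
    have hx := norm_sub_sq_sub_norm_sub_sq p w x
    simp only [quadraticModel, inner_sub_left, inner_sub_right, real_inner_smul_left] at hx ⊢
    field_simp
    linarith
  have hyoung : 0 ≤ 1 / (2 * η) * ‖δ - (p - w)‖ ^ 2 := by positivity
  rw [norm_sub_sq_real, norm_sub_rev p w] at hyoung
  rw [norm_sub_sq_sub_norm_sub_sq p w ((2 : ℝ) • x - y), hcenter, inner_add_left]
  linarith

lemma lyapunov_le_add_of_isMinOn (hη : 0 < η) {θ : ι → ℝ} (hθ : ∑ i, θ i = 1)
    (hθ0 : ∀ i, 0 ≤ θ i) {s : Set E} {g : E → ℝ} (hg : ConvexOn ℝ s g) (f : ι → E → ℝ)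
    (x y : ι → E) {p w : E} (hp : p ∈ s) (hw : w ∈ s)
    (hmin : IsMinOn (proxObjective η g (∑ i, θ i • ((2 : ℝ) • x i - y i))) s p) :
    lyapunov η θ g f p x ≤ lyapunov η θ g f w x
      + ∑ i, θ i * (1 / (2 * η) * ‖proxResidual η (f i) (x i) (y i)‖ ^ 2) := by
  set c : ι → E := fun i => (2 : ℝ) • x i - y i
  have hserver := proxObjective_add_norm_sub_sq_le hg hp hw hmin
  have havg := sum_mul_norm_sub_sq_sub hθ c p w
  have husers : ∑ i, θ i * quadraticModel η (f i) (x i) p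
      ≤ ∑ i, θ i * (quadraticModel η (f i) (x i) w
        + 1 / (2 * η) * (‖p - c i‖ ^ 2 - ‖w - c i‖ ^ 2 + ‖w - p‖ ^ 2
          + ‖proxResidual η (f i) (x i) (y i)‖ ^ 2)) :=
    Finset.sum_le_sum fun i _ =>
      mul_le_mul_of_nonneg_left (quadraticModel_le_add_norm_sub_sq hη _ _ p w) (hθ0 i)
  simp only [mul_add, Finset.sum_add_distrib, mul_left_comm (θ _) (1 / (2 * η)),
    ← Finset.mul_sum, ← Finset.sum_mul, hθ, havg] at husers
  simp only [lyapunov, proxObjective, mul_left_comm (θ _) (1 / (2 * η)),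
    ← Finset.mul_sum] at hserver ⊢
  linarith

lemma quadraticModel_le_sub_inner_add (hη : η ≠ 0) (hf : Differentiable ℝ f)
    (hlip : ∀ u v, ‖gradient f u - gradient f v‖ ≤ L * ‖u - v‖) (x x' w : E) :
    quadraticModel η f x' w ≤ quadraticModel η f x w
      - 1 / η * ⟪w - x, (x' - x) - η • (gradient f x' - gradient f x)⟫
      + (L / 2 + 1 / (2 * η)) * ‖x' - x‖ ^ 2 := by
  have hdescent := (abs_le.1 (abs_sub_sub_inner_gradient_le hf (fun u => hlip u x') x)).1
  have hinner : 1 / η * ⟪w - x, (x' - x) - η • (gradient f x' - gradient f x)⟫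
      = 1 / η * ⟪w - x, x' - x⟫ - ⟪gradient f x', w - x⟫ + ⟪gradient f x, w - x⟫ := by
    have hcomm : ⟪w - x, gradient f x' - gradient f x⟫
        = ⟪gradient f x', w - x⟫ - ⟪gradient f x, w - x⟫ := by
      rw [← inner_sub_left, real_inner_comm]
    rw [inner_sub_right (w - x) (x' - x), real_inner_smul_right, hcomm]
    field_simp
    ring
  have hsq : 1 / (2 * η) * ‖w - x'‖ ^ 2 = 1 / (2 * η) * ‖w - x‖ ^ 2 - 1 / η * ⟪w - x, x' - x⟫
      + 1 / (2 * η) * ‖x' - x‖ ^ 2 := by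
    rw [← sub_sub_sub_cancel_right w x' x, norm_sub_sq_real]
    field_simp
  have hsplit : ⟪gradient f x', w - x'⟫ = ⟪gradient f x', w - x⟫ + ⟪gradient f x', x - x'⟫ := by
    rw [← inner_add_right, sub_add_sub_cancel]
  rw [norm_sub_rev x x'] at hdescent
  rw [quadraticModel, quadraticModel, hinner, hsq, hsplit]
  linarith

lemma quadraticModel_le_of_active (hL : 0 ≤ L) (hη : 0 < η) (hα : 0 < α) (hγ : 0 < γ)
    (hmargin : 0 ≤ stepsizeMargin L η α γ) (hf : Differentiable ℝ f)
    (hlip : ∀ u v, ‖gradient f u - gradient f v‖ ≤ L * ‖u - v‖) {x y x' y' w : E}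
    (hy' : y' = y + α • (w - x)) :
    quadraticModel η f x' w ≤ quadraticModel η f x w - descentRate L η α γ / 2 * ‖w - x‖ ^ 2
      + 1 / (γ * η * α ^ 2) * ‖proxResidual η f x y - proxResidual η f x' y'‖ ^ 2 := by
  set d := x' - x with hd
  set v := η • (gradient f x' - gradient f x) with hv
  set ξ := proxResidual η f x y - proxResidual η f x' y' with hξ
  set b := stepsizeMargin L η α γ / (2 * (1 + (L * η) ^ 2)) with hb
  have hstep : α • (w - x) = d + v + ξ := by
    rw [hd, hv, hξ, proxResidual, proxResidual, hy']
    module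
  have hv_le : ‖v‖ ≤ L * η * ‖d‖ := by
    rw [hv, norm_smul_of_nonneg hη.le]
    linarith [mul_le_mul_of_nonneg_left (hlip x' x) hη.le]
  have hbal : α * (L * η + 1) + 2 * (1 + (L * η) ^ 2) * (b + 2 * (γ * α))
      ≤ 2 * (1 - (L * η) ^ 2) := by
    have hmul : 2 * (1 + (L * η) ^ 2) * b = stepsizeMargin L η α γ :=
      mul_div_cancel₀ _ (by positivity)
    rw [mul_add (2 * (1 + (L * η) ^ 2)), hmul, stepsizeMargin]
    linarith
  have hform := norm_add_add_sq_le_inner_add (by positivity) (by positivity) (by positivity)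
    hbal hv_le ξ
  rw [← hstep, norm_smul_of_nonneg hα.le, real_inner_smul_left] at hform
  have hscaled : 1 / (2 * α * η) * (b * (α * ‖w - x‖) ^ 2 + α * (L * η + 1) * ‖d‖ ^ 2)
      ≤ 1 / (2 * α * η) * (2 * (α * ⟪w - x, d - v⟫) + 2 / (γ * α) * ‖ξ‖ ^ 2) := by gcongr
  have hleft : 1 / (2 * α * η) * (b * (α * ‖w - x‖) ^ 2 + α * (L * η + 1) * ‖d‖ ^ 2)
      = descentRate L η α γ / 2 * ‖w - x‖ ^ 2 + (L / 2 + 1 / (2 * η)) * ‖d‖ ^ 2 := by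
    rw [hb, descentRate]
    field_simp
  have hright : 1 / (2 * α * η) * (2 * (α * ⟪w - x, d - v⟫) + 2 / (γ * α) * ‖ξ‖ ^ 2)
      = 1 / η * ⟪w - x, d - v⟫ + 1 / (γ * η * α ^ 2) * ‖ξ‖ ^ 2 := by
    field_simp
  have hmodel := quadraticModel_le_sub_inner_add hη.ne' hf hlip x x' w
  linarith

lemma proxResidual_sq_sub_le {ε ε' : ℝ} (hη : 0 < η) (hγ : 0 < γ) {x y x' y' : E}
    (hres : ‖proxResidual η f x y‖ ≤ (1 + η * L) * ε)
    (hres' : ‖proxResidual η f x' y'‖ ≤ (1 + η * L) * ε') :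
    1 / (γ * η * α ^ 2) * ‖proxResidual η f x y - proxResidual η f x' y'‖ ^ 2
      ≤ userErrorFactor L η α γ * (ε ^ 2 + ε' ^ 2) := by
  have hsub : ‖proxResidual η f x y - proxResidual η f x' y'‖
      ≤ (1 + η * L) * ε + (1 + η * L) * ε' := (norm_sub_le _ _).trans (add_le_add hres hres')
  calc 1 / (γ * η * α ^ 2) * ‖proxResidual η f x y - proxResidual η f x' y'‖ ^ 2
      ≤ 1 / (γ * η * α ^ 2) * (2 * (((1 + η * L) * ε) ^ 2 + ((1 + η * L) * ε') ^ 2)) := by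
        gcongr
        exact (pow_le_pow_left₀ (norm_nonneg _) hsub 2).trans add_sq_le
    _ = userErrorFactor L η α γ * (ε ^ 2 + ε' ^ 2) := by
        rw [userErrorFactor]
        ring

lemma proxResidual_sq_le {ε : ℝ} (hη : 0 < η) {x y : E}
    (hres : ‖proxResidual η f x y‖ ≤ (1 + η * L) * ε) :
    1 / (2 * η) * ‖proxResidual η f x y‖ ^ 2 ≤ (1 + η ^ 2 * L ^ 2) / η * ε ^ 2 := by
  calc 1 / (2 * η) * ‖proxResidual η f x y‖ ^ 2
      ≤ 1 / (2 * η) * ((1 + η * L) * ε) ^ 2 := by gcongr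
    _ = (1 + η * L) ^ 2 * (1 / (2 * η) * ε ^ 2) := by ring
    _ ≤ 2 * (1 ^ 2 + (η * L) ^ 2) * (1 / (2 * η) * ε ^ 2) := by gcongr; exact add_sq_le
    _ = (1 + η ^ 2 * L ^ 2) / η * ε ^ 2 := by field_simp

lemma lyapunov_le_of_active_set (hL : 0 ≤ L) (hη : 0 < η) (hα : 0 < α) (hγ : 0 < γ)
    (hmargin : 0 ≤ stepsizeMargin L η α γ) {θ : ι → ℝ} (hθ : ∑ i, θ i = 1) (hθ0 : ∀ i, 0 ≤ θ i)
    {s : Set E} {g : E → ℝ} (hg : ConvexOn ℝ s g) {f : ι → E → ℝ}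
    (hf : ∀ i, Differentiable ℝ (f i))
    (hlip : ∀ i u v, ‖gradient (f i) u - gradient (f i) v‖ ≤ L * ‖u - v‖)
    {A : Finset ι} {x y x' y' : ι → E} {ε ε' : ι → ℝ} {xbar xbar' : E}
    (hres : ∀ i, ‖proxResidual η (f i) (x i) (y i)‖ ≤ (1 + η * L) * ε i)
    (hres' : ∀ i, ‖proxResidual η (f i) (x' i) (y' i)‖ ≤ (1 + η * L) * ε' i)
    (hactive : ∀ i ∈ A, y' i = y i + α • (xbar - x i)) (hidle : ∀ i ∉ A, x' i = x i)
    (hxbar : xbar ∈ s) (hxbar' : xbar' ∈ s)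
    (hmin : IsMinOn (proxObjective η g (∑ i, θ i • ((2 : ℝ) • x' i - y' i))) s xbar') :
    lyapunov η θ g f xbar' x' ≤ lyapunov η θ g f xbar x
      - descentRate L η α γ / 2 * ∑ i ∈ A, θ i * ‖xbar - x i‖ ^ 2
      + ∑ i, θ i * (userErrorFactor L η α γ * ε i ^ 2
        + (userErrorFactor L η α γ + (1 + η ^ 2 * L ^ 2) / η) * ε' i ^ 2) := by
  classical
  have hK : 0 ≤ userErrorFactor L η α γ := by rw [userErrorFactor]; positivity
  have huser (i : ι) : quadraticModel η (f i) (x' i) xbar ≤ quadraticModel η (f i) (x i) xbar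
      - descentRate L η α γ / 2 * (if i ∈ A then ‖xbar - x i‖ ^ 2 else 0)
      + userErrorFactor L η α γ * (ε i ^ 2 + ε' i ^ 2) := by
    split_ifs with hi
    · have hstep := quadraticModel_le_of_active (x' := x' i) hL hη hα hγ hmargin (hf i) (hlip i)
        (hactive i hi)
      exact hstep.trans (add_le_add_right (proxResidual_sq_sub_le hη hγ (hres i) (hres' i)) _)
    · rw [hidle i hi, mul_zero, sub_zero]
      exact le_add_of_nonneg_right (by positivity)
  have hsum : ∑ i ∈ A, θ i * ‖xbar - x i‖ ^ 2
      = ∑ i, θ i * (if i ∈ A then ‖xbar - x i‖ ^ 2 else 0) := by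
    simp only [mul_ite, mul_zero, Finset.sum_ite_mem, Finset.univ_inter]
  refine (lyapunov_le_add_of_isMinOn hη hθ hθ0 hg f x' y' hxbar' hxbar hmin).trans ?_
  rw [lyapunov, lyapunov, hsum, Finset.mul_sum, add_assoc, add_sub_assoc, add_assoc,
    ← Finset.sum_add_distrib, ← Finset.sum_sub_distrib, ← Finset.sum_add_distrib]
  gcongr g xbar + ?_
  refine Finset.sum_le_sum fun i _ => ?_
  have := mul_le_mul_of_nonneg_left
    (add_le_add (huser i) (proxResidual_sq_le hη (hres' i))) (hθ0 i)
  linarith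

lemma stepsizeMargin_pos (hL : 0 < L) (hη0 : 0 < η) (hα : 0 < α) (hγ : 0 < γ)
    (hη : η < (√((4 - α) ^ 2 - 16 * α ^ 2 * γ * (1 + 4 * γ)) - α) / (4 * L * (1 + 2 * α * γ))) :
    0 < stepsizeMargin L η α γ := by
  rw [lt_div_iff₀ (by positivity), lt_sub_iff_add_lt, Real.lt_sqrt (by positivity)] at hη
  have hfactor : 8 * (1 + 2 * α * γ) * stepsizeMargin L η α γ
      = (4 - α) ^ 2 - 16 * α ^ 2 * γ * (1 + 4 * γ)
        - (η * (4 * L * (1 + 2 * α * γ)) + α) ^ 2 := by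
    rw [stepsizeMargin]
    ring
  exact pos_of_mul_pos_right (hfactor ▸ sub_pos.2 hη) (by positivity)

lemma mul_div_one_add_le_mul_descentRate (hη : 0 < η) (hα : 0 < α)
    (hmargin : 0 ≤ stepsizeMargin L η α γ) {p γ₁ : ℝ} (hp : 0 ≤ p) (hγ₁ : 0 ≤ γ₁) :
    p * α * stepsizeMargin L η α γ / (2 * η * (1 + γ₁) * (1 + L ^ 2 * η ^ 2))
      ≤ p * descentRate L η α γ := by
  have hrate : 0 ≤ p * descentRate L η α γ := by rw [descentRate]; positivity
  calc p * α * stepsizeMargin L η α γ / (2 * η * (1 + γ₁) * (1 + L ^ 2 * η ^ 2))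
      = p * descentRate L η α γ / (1 + γ₁) := by
        rw [descentRate]
        field_simp
    _ ≤ p * descentRate L η α γ := div_le_self hrate (le_add_of_nonneg_right hγ₁)

theorem feddr_one_step_expected_descent_general (hL : 0 ≤ L) (hη : 0 < η) (hα : 0 < α)
    (hγ : 0 < γ) (hmargin : 0 ≤ stepsizeMargin L η α γ) {θ : ι → ℝ} (hθ : ∑ i, θ i = 1)
    (hθ0 : ∀ i, 0 ≤ θ i) {s : Set E} {g : E → ℝ} (hg : ConvexOn ℝ s g) {f : ι → E → ℝ}
    (hf : ∀ i, Differentiable ℝ (f i))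
    (hlip : ∀ i u v, ‖gradient (f i) u - gradient (f i) v‖ ≤ L * ‖u - v‖)
    {Ω : Type*} [MeasurableSpace Ω] {μ : Measure Ω} [IsProbabilityMeasure μ] {S : Ω → Finset ι}
    (hS : ∀ i, MeasurableSet {ω | i ∈ S ω}) {phat : ℝ} (hphat : ∀ i, phat ≤ μ.real {ω | i ∈ S ω})
    {y z x : ι → E} {ε ε' : ι → ℝ} {xbar : E} (hxbar : xbar ∈ s)
    (hy : ∀ i, y i = z i + η • gradient (f i) (z i)) (hx : ∀ i, ‖x i - z i‖ ≤ ε i)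
    {y' z' x' : ι → Ω → E} {xbar' : Ω → E}
    (hactive : ∀ᵐ ω ∂μ, ∀ i ∈ S ω, y' i ω = y i + α • (xbar - x i) ∧
      IsLocalMin (proxObjective η (f i) (y' i ω)) (z' i ω) ∧ ‖x' i ω - z' i ω‖ ≤ ε' i)
    (hidle : ∀ᵐ ω ∂μ, ∀ i ∉ S ω, y' i ω = y i ∧ x' i ω = x i ∧ ‖x i - z i‖ ≤ ε' i)
    (hserver : ∀ᵐ ω ∂μ, xbar' ω ∈ s ∧
      IsMinOn (proxObjective η g (∑ i, θ i • ((2 : ℝ) • x' i ω - y' i ω))) s (xbar' ω))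
    (hint : Integrable (fun ω => lyapunov η θ g f (xbar' ω) fun i => x' i ω) μ) :
    phat * descentRate L η α γ / 2 * ∑ i, θ i * ‖xbar - x i‖ ^ 2
      ≤ lyapunov η θ g f xbar x - ∫ ω, lyapunov η θ g f (xbar' ω) (fun i => x' i ω) ∂μ
        + ∑ i, θ i * (userErrorFactor L η α γ * ε i ^ 2
          + (userErrorFactor L η α γ + (1 + η ^ 2 * L ^ 2) / η) * ε' i ^ 2) := by
  have hz (i : ι) : proxResidual η (f i) (z i) (y i) = 0 := sub_eq_zero.2 (hy i).symm
  have hdescent : ∀ᵐ ω ∂μ, lyapunov η θ g f (xbar' ω) (fun i => x' i ω)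
      ≤ lyapunov η θ g f xbar x
        + ∑ i, θ i * (userErrorFactor L η α γ * ε i ^ 2
          + (userErrorFactor L η α γ + (1 + η ^ 2 * L ^ 2) / η) * ε' i ^ 2)
        - descentRate L η α γ / 2 * ∑ i ∈ S ω, θ i * ‖xbar - x i‖ ^ 2 := by
    filter_upwards [hactive, hidle, hserver] with ω hact hidl hserv
    have hres' (i : ι) : ‖proxResidual η (f i) (x' i ω) (y' i ω)‖ ≤ (1 + η * L) * ε' i := by
      by_cases hi : i ∈ S ω
      · obtain ⟨-, hmin, hclose⟩ := hact i hi
        exact norm_proxResidual_le hL hη.le (hlip i)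
          (proxResidual_eq_zero_of_isLocalMin hη.ne' (hf i _) hmin) hclose
      · obtain ⟨hy', hx', hclose⟩ := hidl i hi
        rw [hy', hx']
        exact norm_proxResidual_le hL hη.le (hlip i) (hz i) hclose
    have := lyapunov_le_of_active_set hL hη hα hγ hmargin hθ hθ0 hg hf hlip
      (fun i => norm_proxResidual_le hL hη.le (hlip i) (hz i) (hx i)) hres'
      (fun i hi => (hact i hi).1) (fun i hi => (hidl i hi).2.1) hxbar hserv.1 hserv.2
    linarith
  have hsum_int : Integrable
      (fun ω => descentRate L η α γ / 2 * ∑ i ∈ S ω, θ i * ‖xbar - x i‖ ^ 2) μ :=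
    (integrable_sum_mem hS _).const_mul _
  have hexpect := integral_mono_ae hint ((integrable_const _).sub hsum_int) hdescent
  simp only [Pi.sub_apply] at hexpect
  rw [integral_sub (integrable_const _) hsum_int, integral_const, probReal_univ, one_smul,
    integral_const_mul, integral_sum_mem hS] at hexpect
  have hmarginal : descentRate L η α γ / 2 * (phat * ∑ i, θ i * ‖xbar - x i‖ ^ 2)
      ≤ descentRate L η α γ / 2 * ∑ i, μ.real {ω | i ∈ S ω} • (θ i * ‖xbar - x i‖ ^ 2) := by
    have hr : 0 ≤ descentRate L η α γ := by rw [descentRate]; positivity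
    rw [Finset.mul_sum]
    gcongr with i
    exact mul_le_mul_of_nonneg_right (hphat i) (mul_nonneg (hθ0 i) (sq_nonneg _))
  linarith

end FedDR

/-- **One-step expected descent for FedDR (Lemma A.6).**
With the stepsize conditions on `α, η`, a random active set `S` with marginals
`P(i ∈ S) = pᵢ ≥ p̂ > 0`, and one inexact randomized FedDR step from the state
`(yᵢ, zᵢ, xᵢ, eᵢ)ᵢ, x̄`, the Lyapunov function
`V_η(x̄; x) := g(x̄) + (1/n)Σᵢ[fᵢ(xᵢ) + ⟨∇fᵢ(xᵢ), x̄ − xᵢ⟩ + (1/(2η))‖x̄ − xᵢ‖²]` satisfies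
`(β/(2n)) Σᵢ‖x̄ − xᵢ‖² ≤ V_η(x̄; x) − E[V_η(x̄'; x')] + (1/n)Σᵢ(ρ₁εᵢ² + ρ₂(ε'ᵢ)²)`. -/
theorem feddr_one_step_expected_descent {pdim n : ℕ} (hn : 0 < n)
    (f : Fin n → EuclideanSpace ℝ (Fin pdim) → ℝ) (L : ℝ) (hL : 0 < L)
    (hdiff : ∀ i, Differentiable ℝ (f i))
    (hlip : ∀ i u v, ‖gradient (f i) u - gradient (f i) v‖ ≤ L * ‖u - v‖)
    (g : EuclideanSpace ℝ (Fin pdim) → ℝ)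
    (hgconv : ConvexOn ℝ Set.univ g) (hglsc : LowerSemicontinuous g)
    (γ₁ γ₄ : ℝ) (hγ₁ : 0 < γ₁) (hγ₄ : 0 < γ₄)
    (α η : ℝ) (hα0 : 0 < α)
    (hα : α < min 8 (Real.sqrt (17 + 64 * γ₄) - 1) / (4 * (1 + 4 * γ₄)))
    (hη0 : 0 < η)
    (hη : η < (Real.sqrt ((4 - α) ^ 2 - 16 * α ^ 2 * γ₄ * (1 + 4 * γ₄)) - α)
        / (4 * L * (1 + 2 * α * γ₄)))
    (proxg : EuclideanSpace ℝ (Fin pdim) → EuclideanSpace ℝ (Fin pdim))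
    (hproxg : ∀ u, IsMinOn (fun w => g w + (1 / (2 * η)) * ‖w - u‖ ^ 2) Set.univ (proxg u))
    (hproxg_unique : ∀ u w,
      IsMinOn (fun w' => g w' + (1 / (2 * η)) * ‖w' - u‖ ^ 2) Set.univ w → w = proxg u)
    {Ω : Type*} [MeasurableSpace Ω] (μ : Measure Ω) [IsProbabilityMeasure μ]
    (S : Ω → Finset (Fin n))
    (hSmeas : ∀ i, MeasurableSet {ω | i ∈ S ω})
    (prob : Fin n → ℝ) (phat : ℝ) (hphat0 : 0 < phat)
    (hmarg : ∀ i, μ {ω | i ∈ S ω} = ENNReal.ofReal (prob i))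
    (hphat : ∀ i, phat ≤ prob i)
    (y z x e : Fin n → EuclideanSpace ℝ (Fin pdim))
    (ε ε' : Fin n → ℝ)
    (xbar : EuclideanSpace ℝ (Fin pdim))
    (hy : ∀ i, y i = z i + η • gradient (f i) (z i))
    (hx : ∀ i, x i = z i + e i)
    (he : ∀ i, ‖e i‖ ≤ ε i)
    (y' z' x' e' : Fin n → Ω → EuclideanSpace ℝ (Fin pdim))
    (xbar' : Ω → EuclideanSpace ℝ (Fin pdim))
    (hstep : ∀ᵐ ω ∂μ,
      (∀ i ∈ S ω,
        y' i ω = y i + α • (xbar - x i) ∧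
        IsMinOn (fun u => f i u + (1 / (2 * η)) * ‖u - y' i ω‖ ^ 2) Set.univ (z' i ω) ∧
        x' i ω = z' i ω + e' i ω ∧ ‖e' i ω‖ ≤ ε' i) ∧
      (∀ i ∉ S ω,
        y' i ω = y i ∧ z' i ω = z i ∧ x' i ω = x i ∧ e' i ω = e i ∧ ‖e i‖ ≤ ε' i) ∧
      xbar' ω = proxg ((n : ℝ)⁻¹ • ∑ i, ((2 : ℝ) • x' i ω - y' i ω)))
    (Vnext : Ω → ℝ)
    (hVnext : ∀ ω, Vnext ω = g (xbar' ω) + (n : ℝ)⁻¹ * ∑ i,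
      (f i (x' i ω) + ⟪gradient (f i) (x' i ω), xbar' ω - x' i ω⟫
        + (1 / (2 * η)) * ‖xbar' ω - x' i ω‖ ^ 2))
    (hVint : Integrable Vnext μ)
    (β ρ₁ ρ₂ : ℝ)
    (hβ : β = phat * α * (2 - α * (L * η + 1) - 2 * L ^ 2 * η ^ 2
        - 4 * γ₄ * α * (1 + L ^ 2 * η ^ 2)) / (2 * η * (1 + γ₁) * (1 + L ^ 2 * η ^ 2)))
    (hρ₂ : ρ₂ = 2 * (1 + η * L) ^ 2 / (γ₄ * η * α ^ 2) + (1 + η ^ 2 * L ^ 2) / η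
        + α * (2 - α * (L * η + 1) - 2 * L ^ 2 * η ^ 2 - 4 * α * γ₄ * (1 + L ^ 2 * η ^ 2))
          / (2 * η * (1 + L ^ 2 * η ^ 2) * γ₁))
    (hρ₁ : ρ₁ = ρ₂ + (1 + η ^ 2 * L ^ 2) / η) :
    (β / (2 * n)) * ∑ i, ‖xbar - x i‖ ^ 2 ≤
      (g xbar + (n : ℝ)⁻¹ * ∑ i,
          (f i (x i) + ⟪gradient (f i) (x i), xbar - x i⟫
            + (1 / (2 * η)) * ‖xbar - x i‖ ^ 2))
        - (∫ ω, Vnext ω ∂μ)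
        + (n : ℝ)⁻¹ * ∑ i, (ρ₁ * ε i ^ 2 + ρ₂ * ε' i ^ 2) := by
  set K := userErrorFactor L η α γ₄
  have hmargin := (stepsizeMargin_pos hL hη0 hα0 hγ₄ hη).le
  have hβ_le : β ≤ phat * descentRate L η α γ₄ :=
    hβ ▸ mul_div_one_add_le_mul_descentRate hη0 hα0 hmargin hphat0.le hγ₁.le
  have hρ₂_ge : K + (1 + η ^ 2 * L ^ 2) / η ≤ ρ₂ := by
    rw [mul_right_comm 4 α] at hρ₂
    exact hρ₂ ▸ le_add_of_nonneg_right (div_nonneg (mul_nonneg hα0.le hmargin) (by positivity))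
  have hρ₁_ge : K ≤ ρ₁ := by linarith [show 0 ≤ (1 + η ^ 2 * L ^ 2) / η by positivity]
  have hV : Vnext = fun ω => lyapunov η (fun _ => (n : ℝ)⁻¹) g f (xbar' ω) fun i => x' i ω :=
    funext fun ω => by simp only [hVnext, lyapunov, quadraticModel, Finset.mul_sum]
  have hmarg_le (i : Fin n) : phat ≤ μ.real {ω | i ∈ S ω} :=
    (hphat i).trans (by rw [measureReal_def, hmarg, ENNReal.toReal_ofReal']; exact le_max_left _ _)
  have hgeneral := feddr_one_step_expected_descent_general (s := Set.univ) hL.le hη0 hα0 hγ₄ hmargin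
    (by simp [hn.ne']) (fun _ => by positivity) hgconv hdiff hlip hSmeas hmarg_le trivial hy
    (fun i => (congrArg norm (sub_eq_of_eq_add' (hx i))).trans_le (he i))
    (hstep.mono fun ω h i hi => (h.1 i hi).imp_right fun ⟨hz', hx', he'⟩ =>
      ⟨hz'.isLocalMin Filter.univ_mem, (congrArg norm (sub_eq_of_eq_add' hx')).trans_le he'⟩)
    (hstep.mono fun ω h i hi => (h.2.1 i hi).imp_right fun ⟨_, hx', _, he'⟩ =>
      ⟨hx', (congrArg norm (sub_eq_of_eq_add' (hx i))).trans_le he'⟩)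
    (hstep.mono fun ω h => ⟨trivial, by rw [h.2.2, ← Finset.smul_sum]; exact hproxg _⟩)
    (hV ▸ hVint)
  rw [← hV] at hgeneral
  simp only [lyapunov, quadraticModel, ← Finset.mul_sum] at hgeneral
  calc β / (2 * n) * ∑ i, ‖xbar - x i‖ ^ 2 = β / 2 * ((n : ℝ)⁻¹ * ∑ i, ‖xbar - x i‖ ^ 2) := by ring
    _ ≤ phat * descentRate L η α γ₄ / 2 * ((n : ℝ)⁻¹ * ∑ i, ‖xbar - x i‖ ^ 2) := by gcongr
    _ ≤ _ := hgeneral.trans (by gcongr)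
end

section
/- Sure descent for one inexact FedDR step (Lemma A.5). Let S ⊆ {1,…,n} be arbitrary and let α, η, γ₃, γ₄ > 0. Suppose (y_i, z_i, x_i, e_i)_{i=1}^n and x̄ ∈ dom g satisfy y_i = z_i + η∇f_i(z_i) and x_i = z_i + e_i for all i, and define the next state: for i ∈ S, y'_i = y_i + α(x̄ − x_i), z'_i = prox_{ηf_i}(y'_i), x'_i = z'_i + e'_i; for i ∉ S, (y'_i, z'_i, x'_i, e'_i) = (y_i, z_i, x_i, e_i); and x̄' = prox_{ηg}((1/n)Σ_{i=1}^n (2x'_i − y'_i)). Then, with E² := (1/n)Σ_{i=1}^n ‖e'_i‖²: V_η(x̄'; x'₁,…,x'ₙ) ≤ V_η(x̄; x₁,…,xₙ) − ([2 − α(Lη+1) − 2L²η² − 4αγ₄(1+L²η²)]/(2αηn)) Σ_{i∈S} ‖x'_i − x_i‖² − ((1−γ₃)/(2η)) ‖x̄' − x̄‖² + ((1+η²L²)/(ηγ₃)) E² + (2(1+ηL)²/(γ₄ηα²n)) Σ_{i∈S} (‖e_i‖² + ‖e'_i‖²). -/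
open scoped RealInnerProductSpace

/-!
Write `T i = id + η ∇(f i)`. The prox of `η (f i)` inverts `T i`, so `y i = T i (z i)`, and the
inexactness `e i` enters only through the residual `T i (x i) - y i`, of norm at most
`(1 + η L) ‖e i‖`.

With `x'` fixed, the Lyapunov function is `g` plus an average of quadratics of curvature `1 / η`,
and up to the residuals the server's prox step minimizes it exactly. With `x̄` fixed, the
descent lemma replaces `x i` by `x' i` at the cost of an inner product of `x̄ - x i` with
`(x i - η ∇(f i) (x i)) - (x' i - η ∇(f i) (x' i))`. Up to residuals `α (x̄ - x i)` is
`T i (x' i) - T i (x i)`, so this product is a difference of squares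
`η² ‖Δ∇(f i)‖² - ‖Δx i‖²`. Young's inequality absorbs the residuals in both steps.
-/

section FirstOrder

variable {E F : Type*} [NormedAddCommGroup E] [NormedSpace ℝ E] [NormedAddCommGroup F]
  [NormedSpace ℝ F]

lemma norm_sub_sub_fderiv_le_of_norm_fderiv_sub_le {f : E → F} {L : ℝ} {a : E}
    (hf : Differentiable ℝ f) (hlip : ∀ u, ‖fderiv ℝ f u - fderiv ℝ f a‖ ≤ L * ‖u - a‖) (b : E) :
    ‖f b - f a - fderiv ℝ f a (b - a)‖ ≤ L / 2 * ‖b - a‖ ^ 2 := by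
  have hline (t : ℝ) : HasDerivAt (fun t : ℝ ↦ a + t • (b - a)) (b - a) t := by
    simpa using ((hasDerivAt_id t).smul_const (b - a)).const_add a
  have hremainder (t : ℝ) :
      HasDerivAt (fun t : ℝ ↦ f (a + t • (b - a)) - f a - t • fderiv ℝ f a (b - a))
        ((fderiv ℝ f (a + t • (b - a)) - fderiv ℝ f a) (b - a)) t :=
    ((((hf _).hasFDerivAt.comp_hasDerivAt t (hline t)).sub_const (f a)).sub
      ((hasDerivAt_id t).smul_const (fderiv ℝ f a (b - a)))).congr_deriv (by simp)
  have hmajorant (t : ℝ) :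
      HasDerivAt (fun t : ℝ ↦ L / 2 * ‖b - a‖ ^ 2 * t ^ 2) (L * t * ‖b - a‖ ^ 2) t :=
    ((hasDerivAt_pow 2 t).const_mul (L / 2 * ‖b - a‖ ^ 2)).congr_deriv (by push_cast; ring)
  have hbound : ∀ t ∈ Set.Ico (0 : ℝ) 1,
      ‖(fderiv ℝ f (a + t • (b - a)) - fderiv ℝ f a) (b - a)‖ ≤ L * t * ‖b - a‖ ^ 2 := by
    intro t ht
    calc ‖(fderiv ℝ f (a + t • (b - a)) - fderiv ℝ f a) (b - a)‖
        ≤ L * ‖a + t • (b - a) - a‖ * ‖b - a‖ := ContinuousLinearMap.le_of_opNorm_le _ (hlip _) _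
      _ = L * t * ‖b - a‖ ^ 2 := by
        rw [add_sub_cancel_left, norm_smul, Real.norm_of_nonneg ht.1]; ring
  simpa using image_norm_le_of_norm_deriv_right_le_deriv_boundary
    (fun t _ ↦ (hremainder t).continuousAt.continuousWithinAt)
    (fun t _ ↦ (hremainder t).hasDerivWithinAt) (by simp) hmajorant hbound
    (Set.right_mem_Icc.2 zero_le_one)

lemma le_add_fderiv_of_isMinOn_add {g h : E → ℝ} {h' : E →L[ℝ] ℝ} {C : Set E} {p q : E}
    (hg : ConvexOn ℝ C g) (hh : HasFDerivAt h h' p) (hmin : IsMinOn (fun u ↦ g u + h u) C p)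
    (hp : p ∈ C) (hq : q ∈ C) : g p ≤ g q + h' (q - p) := by
  have hslope : ∀ᶠ t : ℝ in nhdsWithin 0 (Set.Ioi 0),
      g p - g q ≤ t⁻¹ • (h (p + t • (q - p)) - h p) := by
    filter_upwards [Ioc_mem_nhdsGT zero_lt_one] with t ⟨ht0, ht1⟩
    have hseg : (1 - t) • p + t • q = p + t • (q - p) := by module
    have hconv := hg.2 hp hq (sub_nonneg.2 ht1) ht0.le (sub_add_cancel 1 t)
    have hle := isMinOn_iff.1 hmin _ (hg.1 hp hq (sub_nonneg.2 ht1) ht0.le (sub_add_cancel 1 t))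
    rw [hseg] at hconv hle
    rw [smul_eq_mul, ← div_eq_inv_mul, le_div_iff₀ ht0]
    simp only [smul_eq_mul] at hconv
    linarith
  linarith [ge_of_tendsto (hh.hasLineDerivAt (q - p)).tendsto_slope_zero_right hslope]

end FirstOrder

section InnerProduct

variable {E : Type*} [NormedAddCommGroup E] [InnerProductSpace ℝ E]

lemma two_mul_inner_le_add_mul_norm_sq {c : ℝ} (hc : 0 < c) (u v : E) :
    2 * ⟪u, v⟫ ≤ c * ‖u‖ ^ 2 + c⁻¹ * ‖v‖ ^ 2 := by
  linarith [real_inner_le_norm u v, two_mul_le_add_mul_sq (a := ‖u‖) (b := ‖v‖) hc]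

lemma inner_add_sub_eq_norm_sq_sub_norm_sq (u v : E) :
    ⟪u + v, u - v⟫ = ‖u‖ ^ 2 - ‖v‖ ^ 2 := by
  rw [inner_add_left, inner_sub_right, inner_sub_right, real_inner_self_eq_norm_sq,
    real_inner_self_eq_norm_sq, real_inner_comm u v]
  ring

lemma hasFDerivAt_const_mul_norm_sub_sq (η : ℝ) (w p : E) :
    HasFDerivAt (fun u ↦ 1 / (2 * η) * ‖u - w‖ ^ 2) (η⁻¹ • innerSL ℝ (p - w)) p := by
  refine ((((hasFDerivAt_id p).sub_const w).norm_sq).const_mul (1 / (2 * η))).congr_fderiv ?_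
  ext v
  simp
  ring

lemma le_add_inner_of_isMinOn_prox {g : E → ℝ} {C : Set E} {η : ℝ} {w p q : E}
    (hg : ConvexOn ℝ C g) (hmin : IsMinOn (fun u ↦ g u + 1 / (2 * η) * ‖u - w‖ ^ 2) C p)
    (hp : p ∈ C) (hq : q ∈ C) : g p ≤ g q + η⁻¹ * ⟪p - w, q - p⟫ :=
  le_add_fderiv_of_isMinOn_add hg (hasFDerivAt_const_mul_norm_sub_sq η w p) hmin hp hq

end InnerProduct

section Smooth

variable {E : Type*} [NormedAddCommGroup E] [InnerProductSpace ℝ E] [CompleteSpace E]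
  {f : E → ℝ} {L η : ℝ}

lemma add_inner_gradient_le_of_norm_gradient_sub_le {a : E} (hf : Differentiable ℝ f)
    (hlip : ∀ u, ‖gradient f u - gradient f a‖ ≤ L * ‖u - a‖) (b : E) :
    f a + ⟪gradient f a, b - a⟫ ≤ f b + L / 2 * ‖b - a‖ ^ 2 := by
  have hlip' (u : E) : ‖fderiv ℝ f u - fderiv ℝ f a‖ ≤ L * ‖u - a‖ := by
    simpa only [← toDual_gradient, ← map_sub, LinearIsometryEquiv.norm_map] using hlip u
  rw [inner_gradient_left]
  linarith [(abs_le.1 (norm_sub_sub_fderiv_le_of_norm_fderiv_sub_le hf hlip' b)).1]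

/-- The map `id + η ∇f`, inverted by the prox of `η f`. A negative `η` gives the gradient descent
map. -/
noncomputable def gradientStep (f : E → ℝ) (η : ℝ) (x : E) : E := x + η • gradient f x

lemma gradientStep_eq_of_isMinOn_prox {y z : E} (hη : η ≠ 0) (hf : DifferentiableAt ℝ f z)
    (hmin : IsLocalMin (fun u ↦ f u + 1 / (2 * η) * ‖u - y‖ ^ 2) z) :
    gradientStep f η z = y := by
  have hderiv := hmin.hasFDerivAt_eq_zero
    (hf.hasFDerivAt.add (hasFDerivAt_const_mul_norm_sub_sq η y z))
  have hgrad : gradient f z + η⁻¹ • (z - y) = 0 := by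
    refine ext_inner_right ℝ fun v ↦ ?_
    simpa [inner_add_left, inner_sub_left, real_inner_smul_left, inner_gradient_left] using
      DFunLike.congr_fun hderiv v
  calc gradientStep f η z = y + η • (gradient f z + η⁻¹ • (z - y)) := by
        rw [gradientStep, smul_add, smul_inv_smul₀ hη]; abel
    _ = y := by rw [hgrad, smul_zero, add_zero]

lemma norm_gradientStep_sub_le {u v : E} (η : ℝ)
    (hlip : ‖gradient f u - gradient f v‖ ≤ L * ‖u - v‖) :
    ‖gradientStep f η u - gradientStep f η v‖ ≤ (1 + |η| * L) * ‖u - v‖ := by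
  calc ‖gradientStep f η u - gradientStep f η v‖
      = ‖(u - v) + η • (gradient f u - gradient f v)‖ := by
        congr 1; simp only [gradientStep]; module
    _ ≤ ‖u - v‖ + |η| * ‖gradient f u - gradient f v‖ := by
        simpa only [norm_smul, Real.norm_eq_abs] using
          norm_add_le (u - v) (η • (gradient f u - gradient f v))
    _ ≤ ‖u - v‖ + |η| * (L * ‖u - v‖) := by gcongr
    _ = (1 + |η| * L) * ‖u - v‖ := by ring

lemma norm_gradientStep_sub_sq_le {u v : E} (η : ℝ)
    (hlip : ‖gradient f u - gradient f v‖ ≤ L * ‖u - v‖) :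
    ‖gradientStep f η u - gradientStep f η v‖ ^ 2 ≤ 2 * (1 + η ^ 2 * L ^ 2) * ‖u - v‖ ^ 2 := by
  calc ‖gradientStep f η u - gradientStep f η v‖ ^ 2
      ≤ ((1 + |η| * L) * ‖u - v‖) ^ 2 := by gcongr; exact norm_gradientStep_sub_le η hlip
    _ = (1 + |η| * L) ^ 2 * ‖u - v‖ ^ 2 := by ring
    _ ≤ 2 * (1 ^ 2 + (|η| * L) ^ 2) * ‖u - v‖ ^ 2 := by gcongr; exact add_sq_le
    _ = 2 * (1 + η ^ 2 * L ^ 2) * ‖u - v‖ ^ 2 := by rw [mul_pow, sq_abs, one_pow]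

lemma inner_gradientStep_sub_gradientStep_neg_sub (f : E → ℝ) (η : ℝ) (u v : E) :
    ⟪gradientStep f η u - gradientStep f η v, gradientStep f (-η) u - gradientStep f (-η) v⟫ =
      ‖u - v‖ ^ 2 - η ^ 2 * ‖gradient f u - gradient f v‖ ^ 2 := by
  have hpos : gradientStep f η u - gradientStep f η v =
      (u - v) + η • (gradient f u - gradient f v) := by simp only [gradientStep]; module
  have hneg : gradientStep f (-η) u - gradientStep f (-η) v =
      (u - v) - η • (gradient f u - gradient f v) := by simp only [gradientStep]; module
  rw [hpos, hneg, inner_add_sub_eq_norm_sq_sub_norm_sq, norm_smul, mul_pow, Real.norm_eq_abs,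
    sq_abs]

/-- The prox-linear model of `f` at `x`: its linearization plus `‖· - x‖² / (2η)`, evaluated at
`q`. -/
noncomputable def proxLinear (f : E → ℝ) (η : ℝ) (x q : E) : ℝ :=
  f x + ⟪gradient f x, q - x⟫ + 1 / (2 * η) * ‖q - x‖ ^ 2

lemma proxLinear_add_inner (hη : η ≠ 0) (f : E → ℝ) (x d p q : E) :
    proxLinear f η x p + η⁻¹ * ⟪p - (gradientStep f (-η) x + d), q - p⟫ =
      proxLinear f η x q - 1 / (2 * η) * ‖p - q‖ ^ 2 + η⁻¹ * ⟪p - q, d⟫ := by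
  have hdecomp : p - (gradientStep f (-η) x + d) = (p - x) + η • gradient f x - d := by
    rw [gradientStep]; module
  have hqx : q - x = (q - p) + (p - x) := by abel
  rw [proxLinear, proxLinear, hdecomp, hqx, ← neg_sub q p, norm_neg, inner_neg_left,
    norm_add_sq_real, inner_add_right, inner_sub_left, inner_add_left, real_inner_smul_left,
    real_inner_comm (q - p) (p - x), real_inner_comm (q - p) d]
  field_simp
  ring

lemma proxLinear_le_add_inner {x x' : E} (hη : η ≠ 0) (hf : Differentiable ℝ f)
    (hlip : ∀ u, ‖gradient f u - gradient f x'‖ ≤ L * ‖u - x'‖) (q : E) :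
    proxLinear f η x' q ≤ proxLinear f η x q
      - η⁻¹ * ⟪q - x, gradientStep f (-η) x' - gradientStep f (-η) x⟫
      + (L / 2 + 1 / (2 * η)) * ‖x' - x‖ ^ 2 := by
  have hdescent := add_inner_gradient_le_of_norm_gradient_sub_le hf hlip x
  have hstep : gradientStep f (-η) x' - gradientStep f (-η) x =
      (x' - x) - η • (gradient f x' - gradient f x) := by simp only [gradientStep]; module
  have hlinear : ⟪gradient f x', q - x'⟫ = ⟪gradient f x, q - x⟫
      + ⟪q - x, gradient f x' - gradient f x⟫ + ⟪gradient f x', x - x'⟫ := by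
    rw [← sub_add_sub_cancel q x x', inner_add_right, real_inner_comm _ (q - x),
      inner_sub_left (gradient f x')]
    ring
  have hsquare : ‖q - x'‖ ^ 2 = ‖q - x‖ ^ 2 - 2 * ⟪q - x, x' - x⟫ + ‖x' - x‖ ^ 2 := by
    rw [← norm_sub_sq_real, sub_sub_sub_cancel_right]
  have hcancel : η⁻¹ * (η * ⟪q - x, gradient f x' - gradient f x⟫) =
      ⟪q - x, gradient f x' - gradient f x⟫ := inv_mul_cancel_left₀ hη _
  have hhalf : 1 / (2 * η) * (2 * ⟪q - x, x' - x⟫) = η⁻¹ * ⟪q - x, x' - x⟫ := by ring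
  rw [norm_sub_rev x x'] at hdescent
  rw [proxLinear, proxLinear, hlinear, hsquare, hstep, inner_sub_right _ (x' - x),
    real_inner_smul_right]
  linarith

lemma proxLinear_le_of_smul_sub_eq {α γ : ℝ} {x x' q r : E} (hα : 0 < α) (hη : 0 < η)
    (hγ : 0 < γ) (hf : Differentiable ℝ f)
    (hlip : ∀ u v, ‖gradient f u - gradient f v‖ ≤ L * ‖u - v‖)
    (hr : α • (q - x) = gradientStep f η x' - gradientStep f η x + r) :
    proxLinear f η x' q ≤ proxLinear f η x q
      - (2 - α * (L * η + 1) - 2 * L ^ 2 * η ^ 2 - 4 * α * γ * (1 + L ^ 2 * η ^ 2))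
          / (2 * α * η) * ‖x' - x‖ ^ 2
      + 1 / (4 * γ * η * α ^ 2) * ‖r‖ ^ 2 := by
  set Δ := gradientStep f (-η) x' - gradientStep f (-η) x
  have hinner : α * ⟪q - x, Δ⟫ =
      ‖x' - x‖ ^ 2 - η ^ 2 * ‖gradient f x' - gradient f x‖ ^ 2 - ⟪Δ, -r⟫ := by
    rw [← real_inner_smul_left, hr, inner_add_left, inner_gradientStep_sub_gradientStep_neg_sub,
      inner_neg_right, real_inner_comm Δ r]
    ring
  have hgrad : η ^ 2 * ‖gradient f x' - gradient f x‖ ^ 2 ≤ η ^ 2 * (L * ‖x' - x‖) ^ 2 := by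
    gcongr
    exact hlip x' x
  have hyoung : 2 * ⟪Δ, -r⟫ ≤
      2 * α * γ * (2 * (1 + η ^ 2 * L ^ 2) * ‖x' - x‖ ^ 2) + (2 * α * γ)⁻¹ * ‖r‖ ^ 2 := by
    calc 2 * ⟪Δ, -r⟫
        ≤ 2 * α * γ * ‖Δ‖ ^ 2 + (2 * α * γ)⁻¹ * ‖r‖ ^ 2 := by
          simpa only [norm_neg] using two_mul_inner_le_add_mul_norm_sq (by positivity) Δ (-r)
      _ ≤ _ := by
          gcongr
          simpa only [neg_sq] using norm_gradientStep_sub_sq_le (-η) (hlip x' x)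
  have hscaled : -(α * ⟪q - x, Δ⟫) ≤
      (L ^ 2 * η ^ 2 - 1 + 2 * α * γ * (1 + L ^ 2 * η ^ 2)) * ‖x' - x‖ ^ 2
        + 1 / (4 * α * γ) * ‖r‖ ^ 2 := by
    have hinv : (2 * α * γ)⁻¹ = 2 * (1 / (4 * α * γ)) := by field_simp; norm_num
    rw [hinv] at hyoung
    linarith
  calc proxLinear f η x' q
      ≤ proxLinear f η x q - η⁻¹ * ⟪q - x, Δ⟫ + (L / 2 + 1 / (2 * η)) * ‖x' - x‖ ^ 2 :=
        proxLinear_le_add_inner hη.ne' hf (fun u ↦ hlip u x') q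
    _ = proxLinear f η x q + 1 / (α * η) * -(α * ⟪q - x, Δ⟫)
          + (L / 2 + 1 / (2 * η)) * ‖x' - x‖ ^ 2 := by field_simp; ring
    _ ≤ proxLinear f η x q + 1 / (α * η) *
          ((L ^ 2 * η ^ 2 - 1 + 2 * α * γ * (1 + L ^ 2 * η ^ 2)) * ‖x' - x‖ ^ 2
            + 1 / (4 * α * γ) * ‖r‖ ^ 2) + (L / 2 + 1 / (2 * η)) * ‖x' - x‖ ^ 2 := by gcongr
    _ = _ := by field_simp; ring

lemma norm_gradientStep_residual_sub_sq_le {x z x' z' : E} (hη : 0 ≤ η)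
    (hlip : ∀ u v, ‖gradient f u - gradient f v‖ ≤ L * ‖u - v‖) :
    ‖(gradientStep f η x - gradientStep f η z) - (gradientStep f η x' - gradientStep f η z')‖ ^ 2
      ≤ 2 * (1 + η * L) ^ 2 * (‖x - z‖ ^ 2 + ‖x' - z'‖ ^ 2) := by
  have hresidual (u v : E) :
      ‖gradientStep f η u - gradientStep f η v‖ ≤ (1 + η * L) * ‖u - v‖ := by
    simpa only [abs_of_nonneg hη] using norm_gradientStep_sub_le η (hlip u v)
  calc _ ≤ ((1 + η * L) * ‖x - z‖ + (1 + η * L) * ‖x' - z'‖) ^ 2 := by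
        gcongr
        exact (norm_sub_le _ _).trans (add_le_add (hresidual x z) (hresidual x' z'))
    _ ≤ 2 * (((1 + η * L) * ‖x - z‖) ^ 2 + ((1 + η * L) * ‖x' - z'‖) ^ 2) := add_sq_le
    _ = 2 * (1 + η * L) ^ 2 * (‖x - z‖ ^ 2 + ‖x' - z'‖ ^ 2) := by ring

lemma proxLinear_le_of_smul_sub_eq_gradientStep_sub {α γ : ℝ} {x z x' z' q : E} (hα : 0 < α)
    (hη : 0 < η) (hγ : 0 < γ) (hf : Differentiable ℝ f)
    (hlip : ∀ u v, ‖gradient f u - gradient f v‖ ≤ L * ‖u - v‖)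
    (hupd : α • (q - x) = gradientStep f η z' - gradientStep f η z) :
    proxLinear f η x' q ≤ proxLinear f η x q
      - (2 - α * (L * η + 1) - 2 * L ^ 2 * η ^ 2 - 4 * α * γ * (1 + L ^ 2 * η ^ 2))
          / (2 * α * η) * ‖x' - x‖ ^ 2
      + 2 * (1 + η * L) ^ 2 / (γ * η * α ^ 2) * (‖x - z‖ ^ 2 + ‖x' - z'‖ ^ 2) := by
  refine (proxLinear_le_of_smul_sub_eq (r := (gradientStep f η x - gradientStep f η z) -
    (gradientStep f η x' - gradientStep f η z')) hα hη hγ hf hlip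
    (by rw [hupd]; abel)).trans (add_le_add_right ?_ _)
  calc _ ≤ 1 / (4 * γ * η * α ^ 2) *
        (2 * (1 + η * L) ^ 2 * (‖x - z‖ ^ 2 + ‖x' - z'‖ ^ 2)) := by
        gcongr; exact norm_gradientStep_residual_sub_sq_le hη.le hlip
    _ = 1 / 4 * (2 * (1 + η * L) ^ 2 / (γ * η * α ^ 2) * (‖x - z‖ ^ 2 + ‖x' - z'‖ ^ 2)) := by
        field_simp
    _ ≤ _ := mul_le_of_le_one_left (by positivity) (by norm_num)

lemma proxLinear_add_inner_prox_le {γ : ℝ} {x z : E} (hη : 0 < η) (hγ : 0 < γ)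
    (hlip : ‖gradient f x - gradient f z‖ ≤ L * ‖x - z‖) (p q : E) :
    proxLinear f η x p + η⁻¹ * ⟪p - ((2 : ℝ) • x - gradientStep f η z), q - p⟫ ≤
      proxLinear f η x q - (1 - γ) / (2 * η) * ‖p - q‖ ^ 2
        + (1 + η ^ 2 * L ^ 2) / (η * γ) * ‖x - z‖ ^ 2 := by
  set d := gradientStep f η x - gradientStep f η z
  have hpoint : (2 : ℝ) • x - gradientStep f η z = gradientStep f (-η) x + d := by
    simp only [d, gradientStep]; module
  have hyoung : 2 * ⟪p - q, d⟫ ≤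
      γ * ‖p - q‖ ^ 2 + γ⁻¹ * (2 * (1 + η ^ 2 * L ^ 2) * ‖x - z‖ ^ 2) := by
    refine (two_mul_inner_le_add_mul_norm_sq hγ (p - q) d).trans ?_
    gcongr
    exact norm_gradientStep_sub_sq_le η hlip
  calc _ = proxLinear f η x q - 1 / (2 * η) * ‖p - q‖ ^ 2
          + 1 / (2 * η) * (2 * ⟪p - q, d⟫) := by
        rw [hpoint, proxLinear_add_inner hη.ne']; ring
    _ ≤ proxLinear f η x q - 1 / (2 * η) * ‖p - q‖ ^ 2 + 1 / (2 * η) *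
          (γ * ‖p - q‖ ^ 2 + γ⁻¹ * (2 * (1 + η ^ 2 * L ^ 2) * ‖x - z‖ ^ 2)) := by gcongr
    _ = _ := by field_simp; ring

end Smooth

section Lyapunov

variable {E ι : Type*} [NormedAddCommGroup E] [InnerProductSpace ℝ E] [Fintype ι]

lemma inner_sub_inv_card_smul_sum [Nonempty ι] (w : ι → E) (p v : E) :
    ⟪p - (Fintype.card ι : ℝ)⁻¹ • ∑ i, w i, v⟫ = (Fintype.card ι : ℝ)⁻¹ * ∑ i, ⟪p - w i, v⟫ := by
  rw [← sum_inner, ← real_inner_smul_left, Finset.sum_sub_distrib, Finset.sum_const,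
    Finset.card_univ, smul_sub, ← Nat.cast_smul_eq_nsmul ℝ, inv_smul_smul₀ (by simp)]

variable [CompleteSpace E] {f : ι → E → ℝ} {g : E → ℝ} {L η : ℝ}

/-- The FedDR Lyapunov function `V_η(q; x₁, …, xₙ)`. -/
noncomputable def feddrLyapunov (f : ι → E → ℝ) (g : E → ℝ) (η : ℝ) (x : ι → E) (q : E) : ℝ :=
  g q + (Fintype.card ι : ℝ)⁻¹ * ∑ i, proxLinear (f i) η (x i) q

lemma feddrLyapunov_server_le [Nonempty ι] {C : Set E} {γ : ℝ} {x z : ι → E} {p q : E}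
    (hη : 0 < η) (hγ : 0 < γ)
    (hlip : ∀ i, ‖gradient (f i) (x i) - gradient (f i) (z i)‖ ≤ L * ‖x i - z i‖)
    (hg : ConvexOn ℝ C g) (hp : p ∈ C) (hq : q ∈ C)
    (hmin : IsMinOn (fun u ↦ g u + 1 / (2 * η) * ‖u - (Fintype.card ι : ℝ)⁻¹ •
      ∑ i, ((2 : ℝ) • x i - gradientStep (f i) η (z i))‖ ^ 2) C p) :
    feddrLyapunov f g η x p ≤ feddrLyapunov f g η x q - (1 - γ) / (2 * η) * ‖p - q‖ ^ 2
      + (1 + η ^ 2 * L ^ 2) / (η * γ) * ((Fintype.card ι : ℝ)⁻¹ * ∑ i, ‖x i - z i‖ ^ 2) := by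
  have hprox := le_add_inner_of_isMinOn_prox hg hmin hp hq
  have hmodels := mul_le_mul_of_nonneg_left
    (Finset.sum_le_sum fun i (_ : i ∈ Finset.univ) ↦
      proxLinear_add_inner_prox_le hη hγ (hlip i) p q)
    (inv_nonneg.2 (Nat.cast_nonneg (α := ℝ) (Fintype.card ι)))
  have hcard : (Fintype.card ι : ℝ)⁻¹ * (Fintype.card ι * ((1 - γ) / (2 * η) * ‖p - q‖ ^ 2)) =
      (1 - γ) / (2 * η) * ‖p - q‖ ^ 2 := inv_mul_cancel_left₀ (by simp) _
  rw [inner_sub_inv_card_smul_sum] at hprox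
  simp only [Finset.sum_add_distrib, Finset.sum_sub_distrib, ← Finset.mul_sum, Finset.sum_const,
    Finset.card_univ, nsmul_eq_mul, mul_add, mul_sub] at hmodels
  simp only [feddrLyapunov]
  linarith

lemma feddrLyapunov_client_le {α γ : ℝ} {S : Finset ι} {x z x' z' : ι → E} {q : E} (hα : 0 < α)
    (hη : 0 < η) (hγ : 0 < γ) (hf : ∀ i, Differentiable ℝ (f i))
    (hlip : ∀ i u v, ‖gradient (f i) u - gradient (f i) v‖ ≤ L * ‖u - v‖)
    (hupd : ∀ i ∈ S,
      α • (q - x i) = gradientStep (f i) η (z' i) - gradientStep (f i) η (z i))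
    (hkeep : ∀ i ∉ S, x' i = x i) :
    feddrLyapunov f g η x' q ≤ feddrLyapunov f g η x q
      - (2 - α * (L * η + 1) - 2 * L ^ 2 * η ^ 2 - 4 * α * γ * (1 + L ^ 2 * η ^ 2))
          / (2 * α * η * Fintype.card ι) * ∑ i ∈ S, ‖x' i - x i‖ ^ 2
      + 2 * (1 + η * L) ^ 2 / (γ * η * α ^ 2 * Fintype.card ι)
          * ∑ i ∈ S, (‖x i - z i‖ ^ 2 + ‖x' i - z' i‖ ^ 2) := by
  have hrestrict : ∑ i, (proxLinear (f i) η (x' i) q - proxLinear (f i) η (x i) q) =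
      ∑ i ∈ S, (proxLinear (f i) η (x' i) q - proxLinear (f i) η (x i) q) :=
    (Finset.sum_subset (Finset.subset_univ S) fun i _ hi ↦ by rw [hkeep i hi, sub_self]).symm
  have hclients : ∑ i ∈ S, (proxLinear (f i) η (x' i) q - proxLinear (f i) η (x i) q) ≤
      2 * (1 + η * L) ^ 2 / (γ * η * α ^ 2) * ∑ i ∈ S, (‖x i - z i‖ ^ 2 + ‖x' i - z' i‖ ^ 2)
        - (2 - α * (L * η + 1) - 2 * L ^ 2 * η ^ 2 - 4 * α * γ * (1 + L ^ 2 * η ^ 2))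
          / (2 * α * η) * ∑ i ∈ S, ‖x' i - x i‖ ^ 2 := by
    rw [Finset.mul_sum, Finset.mul_sum, ← Finset.sum_sub_distrib]
    refine Finset.sum_le_sum fun i hi ↦ ?_
    linarith [proxLinear_le_of_smul_sub_eq_gradientStep_sub (x' := x' i) hα hη hγ (hf i) (hlip i)
      (hupd i hi)]
  rw [← hrestrict, Finset.sum_sub_distrib] at hclients
  calc feddrLyapunov f g η x' q
      = feddrLyapunov f g η x q + (Fintype.card ι : ℝ)⁻¹ *
          (∑ i, proxLinear (f i) η (x' i) q - ∑ i, proxLinear (f i) η (x i) q) := by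
        simp only [feddrLyapunov]; ring
    _ ≤ feddrLyapunov f g η x q + (Fintype.card ι : ℝ)⁻¹ *
          (2 * (1 + η * L) ^ 2 / (γ * η * α ^ 2) * ∑ i ∈ S, (‖x i - z i‖ ^ 2 + ‖x' i - z' i‖ ^ 2)
            - (2 - α * (L * η + 1) - 2 * L ^ 2 * η ^ 2 - 4 * α * γ * (1 + L ^ 2 * η ^ 2))
              / (2 * α * η) * ∑ i ∈ S, ‖x' i - x i‖ ^ 2) := by gcongr
    _ = _ := by ring

end Lyapunov

/-- The convex set `C` plays the role of `dom g`, which encodes functions with values in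
`ℝ ∪ {+∞}`. -/
theorem feddr_sure_descent_one_step_general {E ι : Type*} [NormedAddCommGroup E]
    [InnerProductSpace ℝ E] [CompleteSpace E] [Fintype ι] [Nonempty ι]
    {f : ι → E → ℝ} {g : E → ℝ} {C : Set E} {L α η γ₃ γ₄ : ℝ}
    (hdiff : ∀ i, Differentiable ℝ (f i))
    (hlip : ∀ i u v, ‖gradient (f i) u - gradient (f i) v‖ ≤ L * ‖u - v‖)
    (hgconv : ConvexOn ℝ C g) (hα : 0 < α) (hη : 0 < η) (hγ₃ : 0 < γ₃) (hγ₄ : 0 < γ₄)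
    (S : Finset ι) {y z x e y' z' x' e' : ι → E} {xbar xbar' : E}
    (hxbar : xbar ∈ C) (hxbar' : xbar' ∈ C)
    (hy : ∀ i, y i = z i + η • gradient (f i) (z i))
    (hx : ∀ i, x i = z i + e i)
    (hupd : ∀ i ∈ S,
      y' i = y i + α • (xbar - x i) ∧
      IsMinOn (fun u ↦ f i u + (1 / (2 * η)) * ‖u - y' i‖ ^ 2) Set.univ (z' i) ∧
      x' i = z' i + e' i)
    (hkeep : ∀ i ∉ S, y' i = y i ∧ z' i = z i ∧ x' i = x i ∧ e' i = e i)
    (hmin : IsMinOn (fun w ↦ g w + (1 / (2 * η)) *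
      ‖w - (Fintype.card ι : ℝ)⁻¹ • ∑ i, ((2 : ℝ) • x' i - y' i)‖ ^ 2) C xbar') :
    feddrLyapunov f g η x' xbar' ≤ feddrLyapunov f g η x xbar
        - ((2 - α * (L * η + 1) - 2 * L ^ 2 * η ^ 2 - 4 * α * γ₄ * (1 + L ^ 2 * η ^ 2))
            / (2 * α * η * Fintype.card ι)) * ∑ i ∈ S, ‖x' i - x i‖ ^ 2
        - ((1 - γ₃) / (2 * η)) * ‖xbar' - xbar‖ ^ 2
        + ((1 + η ^ 2 * L ^ 2) / (η * γ₃)) * ((Fintype.card ι : ℝ)⁻¹ * ∑ i, ‖e' i‖ ^ 2)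
        + (2 * (1 + η * L) ^ 2 / (γ₄ * η * α ^ 2 * Fintype.card ι))
            * ∑ i ∈ S, (‖e i‖ ^ 2 + ‖e' i‖ ^ 2) := by
  have hstep' (i : ι) : gradientStep (f i) η (z' i) = y' i ∧ x' i = z' i + e' i := by
    by_cases hi : i ∈ S
    · obtain ⟨-, hz', hx'⟩ := hupd i hi
      exact ⟨gradientStep_eq_of_isMinOn_prox hη.ne' (hdiff i _) (hz'.isLocalMin Filter.univ_mem),
        hx'⟩
    · obtain ⟨hyi, hzi, hxi, hei⟩ := hkeep i hi
      rw [hyi, hzi, hxi, hei]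
      exact ⟨(hy i).symm, hx i⟩
  have herror (i : ι) : x i - z i = e i := sub_eq_of_eq_add' (hx i)
  have herror' (i : ι) : x' i - z' i = e' i := sub_eq_of_eq_add' (hstep' i).2
  have hserver := feddrLyapunov_server_le (f := f) (x := x') (z := z') hη hγ₃
    (fun i ↦ hlip i _ _) hgconv hxbar' hxbar (by simpa only [(hstep' _).1] using hmin)
  have hclients := feddrLyapunov_client_le (g := g) (x' := x') (z := z) (z' := z') (q := xbar) hα hη
    hγ₄ hdiff hlip (fun i hi ↦ by rw [(hstep' i).1, (hupd i hi).1, hy i]; simp [gradientStep])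
    (fun i hi ↦ (hkeep i hi).2.2.1)
  simp only [herror, herror'] at hserver hclients
  linarith

/-- **Sure descent for one inexact FedDR step (Lemma A.5).**
For an arbitrary subset `S ⊆ {1,…,n}` and one inexact FedDR step, with
`V_η(x̄; x) := g(x̄) + (1/n)Σᵢ[fᵢ(xᵢ) + ⟨∇fᵢ(xᵢ), x̄ − xᵢ⟩ + (1/(2η))‖x̄ − xᵢ‖²]` and
`E² := (1/n)Σᵢ‖e'ᵢ‖²`:
`V_η(x̄'; x') ≤ V_η(x̄; x) − ([2 − α(Lη+1) − 2L²η² − 4αγ₄(1+L²η²)]/(2αηn)) Σ_{i∈S}‖x'ᵢ − xᵢ‖²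
  − ((1−γ₃)/(2η))‖x̄' − x̄‖² + ((1+η²L²)/(ηγ₃))E²
  + (2(1+ηL)²/(γ₄ηα²n)) Σ_{i∈S}(‖eᵢ‖² + ‖e'ᵢ‖²)`. -/
theorem feddr_sure_descent_one_step {pdim n : ℕ} (hn : 0 < n)
    (f : Fin n → EuclideanSpace ℝ (Fin pdim) → ℝ) (L : ℝ) (hL : 0 < L)
    (hdiff : ∀ i, Differentiable ℝ (f i))
    (hlip : ∀ i u v, ‖gradient (f i) u - gradient (f i) v‖ ≤ L * ‖u - v‖)
    (g : EuclideanSpace ℝ (Fin pdim) → ℝ)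
    (hgconv : ConvexOn ℝ Set.univ g) (hglsc : LowerSemicontinuous g)
    (α η γ₃ γ₄ : ℝ) (hα : 0 < α) (hη : 0 < η) (hγ₃ : 0 < γ₃) (hγ₄ : 0 < γ₄)
    (proxg : EuclideanSpace ℝ (Fin pdim) → EuclideanSpace ℝ (Fin pdim))
    (hproxg : ∀ u, IsMinOn (fun w => g w + (1 / (2 * η)) * ‖w - u‖ ^ 2) Set.univ (proxg u))
    (hproxg_unique : ∀ u w,
      IsMinOn (fun w' => g w' + (1 / (2 * η)) * ‖w' - u‖ ^ 2) Set.univ w → w = proxg u)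
    (S : Finset (Fin n))
    (y z x e y' z' x' e' : Fin n → EuclideanSpace ℝ (Fin pdim))
    (xbar xbar' : EuclideanSpace ℝ (Fin pdim))
    (hy : ∀ i, y i = z i + η • gradient (f i) (z i))
    (hx : ∀ i, x i = z i + e i)
    (hupd : ∀ i ∈ S,
      y' i = y i + α • (xbar - x i) ∧
      IsMinOn (fun u => f i u + (1 / (2 * η)) * ‖u - y' i‖ ^ 2) Set.univ (z' i) ∧
      x' i = z' i + e' i)
    (hkeep : ∀ i ∉ S, y' i = y i ∧ z' i = z i ∧ x' i = x i ∧ e' i = e i)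
    (hxbar' : xbar' = proxg ((n : ℝ)⁻¹ • ∑ i, ((2 : ℝ) • x' i - y' i))) :
    g xbar' + (n : ℝ)⁻¹ * ∑ i,
        (f i (x' i) + ⟪gradient (f i) (x' i), xbar' - x' i⟫
          + (1 / (2 * η)) * ‖xbar' - x' i‖ ^ 2) ≤
      (g xbar + (n : ℝ)⁻¹ * ∑ i,
          (f i (x i) + ⟪gradient (f i) (x i), xbar - x i⟫
            + (1 / (2 * η)) * ‖xbar - x i‖ ^ 2))
        - ((2 - α * (L * η + 1) - 2 * L ^ 2 * η ^ 2 - 4 * α * γ₄ * (1 + L ^ 2 * η ^ 2))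
            / (2 * α * η * n)) * ∑ i ∈ S, ‖x' i - x i‖ ^ 2
        - ((1 - γ₃) / (2 * η)) * ‖xbar' - xbar‖ ^ 2
        + ((1 + η ^ 2 * L ^ 2) / (η * γ₃)) * ((n : ℝ)⁻¹ * ∑ i, ‖e' i‖ ^ 2)
        + (2 * (1 + η * L) ^ 2 / (γ₄ * η * α ^ 2 * n))
            * ∑ i ∈ S, (‖e i‖ ^ 2 + ‖e' i‖ ^ 2) := by
  have : Nonempty (Fin n) := ⟨⟨0, hn⟩⟩
  simpa only [feddrLyapunov, proxLinear, Fintype.card_fin] using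
    feddr_sure_descent_one_step_general hdiff hlip hgconv hα hη hγ₃ hγ₄ S (Set.mem_univ xbar)
      (Set.mem_univ xbar') hy hx hupd hkeep
      (by rw [hxbar', Fintype.card_fin]; exact hproxg _)
end

section
/- Bound on the residual of an active user (Lemma A.2). Let f : ℝ^p → ℝ be differentiable with L-Lipschitz gradient, and let α, η > 0 and γ₁ > 0. Suppose y, y', z, z', x, x', e, e', x̄ ∈ ℝ^p satisfy y' = y + α(x̄ − x), y = z + η∇f(z), y' = z' + η∇f(z'), x = z + e, and x' = z' + e'. Then ‖x̄ − x‖² ≤ (2(1+η²L²)/α²)[(1+γ₁)‖x' − x‖² + (2(1+γ₁)/γ₁)(‖e'‖² + ‖e‖²)]. In particular, if e = e' = 0 then ‖x̄ − x‖² ≤ (2(1+η²L²)/α²)‖x' − x‖². -/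
open scoped RealInnerProductSpace

/-!
Subtracting the two relations `y = z + η G z` and `y' = z' + η G z'` shows that
`α (x̄ - x) = (z' - z) + η (G z' - G z)`, so the residual is controlled by `‖z' - z‖` through the
Lipschitz bound on `G = ∇f`. Since `z' - z = (x' - x) + (e - e')`, Young's inequality with weight
`γ₁` separates the observed displacement `x' - x` from the errors.
-/

section SeminormedAddCommGroup

variable {E : Type*} [SeminormedAddCommGroup E]

lemma norm_add_sq_le_two_mul (a b : E) : ‖a + b‖ ^ 2 ≤ 2 * (‖a‖ ^ 2 + ‖b‖ ^ 2) :=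
  (pow_le_pow_left₀ (norm_nonneg _) (norm_add_le a b) 2).trans add_sq_le

lemma norm_sub_sq_le_two_mul (a b : E) : ‖a - b‖ ^ 2 ≤ 2 * (‖a‖ ^ 2 + ‖b‖ ^ 2) := by
  simpa only [sub_eq_add_neg, norm_neg] using norm_add_sq_le_two_mul a (-b)

lemma norm_add_sq_le_young {γ : ℝ} (hγ : 0 < γ) (a b : E) :
    ‖a + b‖ ^ 2 ≤ (1 + γ) * ‖a‖ ^ 2 + (1 + γ⁻¹) * ‖b‖ ^ 2 := by
  have young : 2 * ‖a‖ * ‖b‖ ≤ γ * ‖a‖ ^ 2 + γ⁻¹ * ‖b‖ ^ 2 := two_mul_le_add_mul_sq hγ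
  calc
    ‖a + b‖ ^ 2 ≤ (‖a‖ + ‖b‖) ^ 2 := pow_le_pow_left₀ (norm_nonneg _) (norm_add_le a b) 2
    _ = ‖a‖ ^ 2 + 2 * ‖a‖ * ‖b‖ + ‖b‖ ^ 2 := add_sq _ _
    _ ≤ (1 + γ) * ‖a‖ ^ 2 + (1 + γ⁻¹) * ‖b‖ ^ 2 := by linarith

lemma norm_add_sub_sq_le_young {γ : ℝ} (hγ : 0 < γ) (d u v : E) :
    ‖d + (u - v)‖ ^ 2 ≤
      (1 + γ) * ‖d‖ ^ 2 + (2 * (1 + γ) / γ) * (‖u‖ ^ 2 + ‖v‖ ^ 2) :=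
  calc
    ‖d + (u - v)‖ ^ 2 ≤ (1 + γ) * ‖d‖ ^ 2 + (1 + γ⁻¹) * ‖u - v‖ ^ 2 :=
      norm_add_sq_le_young hγ d (u - v)
    _ ≤ (1 + γ) * ‖d‖ ^ 2 + (1 + γ⁻¹) * (2 * (‖u‖ ^ 2 + ‖v‖ ^ 2)) := by
      gcongr
      exact norm_sub_sq_le_two_mul u v
    _ = (1 + γ) * ‖d‖ ^ 2 + (2 * (1 + γ) / γ) * (‖u‖ ^ 2 + ‖v‖ ^ 2) := by
      field_simp
      ring

end SeminormedAddCommGroup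

section NormedSpace

variable {E : Type*} [SeminormedAddCommGroup E] [NormedSpace ℝ E]

lemma norm_add_smul_sq_le {d g : E} {L : ℝ} (hg : ‖g‖ ≤ L * ‖d‖) (η : ℝ) :
    ‖d + η • g‖ ^ 2 ≤ 2 * (1 + η ^ 2 * L ^ 2) * ‖d‖ ^ 2 :=
  calc
    ‖d + η • g‖ ^ 2 ≤ 2 * (‖d‖ ^ 2 + ‖η • g‖ ^ 2) := norm_add_sq_le_two_mul d (η • g)
    _ = 2 * (‖d‖ ^ 2 + η ^ 2 * ‖g‖ ^ 2) := by rw [norm_smul, mul_pow, Real.norm_eq_abs, sq_abs]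
    _ ≤ 2 * (‖d‖ ^ 2 + η ^ 2 * (L * ‖d‖) ^ 2) := by gcongr
    _ = 2 * (1 + η ^ 2 * L ^ 2) * ‖d‖ ^ 2 := by ring

lemma norm_sq_le_div_sq_mul_of_smul_eq {α η L : ℝ} (hα : α ≠ 0) {r d g : E}
    (hr : α • r = d + η • g) (hg : ‖g‖ ≤ L * ‖d‖) :
    ‖r‖ ^ 2 ≤ (2 * (1 + η ^ 2 * L ^ 2) / α ^ 2) * ‖d‖ ^ 2 := by
  rw [div_mul_eq_mul_div, le_div_iff₀' (by positivity)]
  calc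
    α ^ 2 * ‖r‖ ^ 2 = ‖α • r‖ ^ 2 := by rw [norm_smul, mul_pow, Real.norm_eq_abs, sq_abs]
    _ = ‖d + η • g‖ ^ 2 := by rw [hr]
    _ ≤ 2 * (1 + η ^ 2 * L ^ 2) * ‖d‖ ^ 2 := norm_add_smul_sq_le hg η

theorem feddr_residual_bound_active_user_general
    (G : E → E) (L : ℝ) (hlip : ∀ u v, ‖G u - G v‖ ≤ L * ‖u - v‖)
    (α η γ₁ : ℝ) (hα : α ≠ 0) (hγ₁ : 0 < γ₁)
    (y y' z z' x x' e e' xbar : E)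
    (hy' : y' = y + α • (xbar - x))
    (hyz : y = z + η • G z)
    (hy'z' : y' = z' + η • G z')
    (hx : x = z + e) (hx' : x' = z' + e') :
    ‖xbar - x‖ ^ 2 ≤ (2 * (1 + η ^ 2 * L ^ 2) / α ^ 2) *
        ((1 + γ₁) * ‖x' - x‖ ^ 2 + (2 * (1 + γ₁) / γ₁) * (‖e'‖ ^ 2 + ‖e‖ ^ 2)) ∧
      (e = 0 → e' = 0 →
        ‖xbar - x‖ ^ 2 ≤ (2 * (1 + η ^ 2 * L ^ 2) / α ^ 2) * ‖x' - x‖ ^ 2) := by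
  have residual_eq : α • (xbar - x) = (z' - z) + η • (G z' - G z) := by
    rw [eq_sub_of_add_eq' hy'.symm, hyz, hy'z', smul_sub]
    abel
  have residual_le : ‖xbar - x‖ ^ 2 ≤ (2 * (1 + η ^ 2 * L ^ 2) / α ^ 2) * ‖z' - z‖ ^ 2 :=
    norm_sq_le_div_sq_mul_of_smul_eq hα residual_eq (hlip z' z)
  have displacement_eq : z' - z = (x' - x) + (e - e') := by
    rw [hx, hx']
    abel
  constructor
  · have displacement_le : ‖z' - z‖ ^ 2 ≤
        (1 + γ₁) * ‖x' - x‖ ^ 2 + (2 * (1 + γ₁) / γ₁) * (‖e'‖ ^ 2 + ‖e‖ ^ 2) := by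
      rw [displacement_eq, add_comm (‖e'‖ ^ 2)]
      exact norm_add_sub_sq_le_young hγ₁ (x' - x) e e'
    exact residual_le.trans (by gcongr)
  · rintro rfl rfl
    rwa [displacement_eq, sub_zero, add_zero] at residual_le

end NormedSpace

/-- **Bound on the residual of an active user (Lemma A.2).**
Let `f : ℝ^p → ℝ` be differentiable with `L`-Lipschitz gradient, `α, η, γ₁ > 0`.
If `y' = y + α(x̄ − x)`, `y = z + η∇f(z)`, `y' = z' + η∇f(z')`, `x = z + e`, `x' = z' + e'`,
then `‖x̄ − x‖² ≤ (2(1+η²L²)/α²)[(1+γ₁)‖x' − x‖² + (2(1+γ₁)/γ₁)(‖e'‖² + ‖e‖²)]`;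
in particular, if `e = e' = 0` then `‖x̄ − x‖² ≤ (2(1+η²L²)/α²)‖x' − x‖²`. -/
theorem feddr_residual_bound_active_user {p : ℕ}
    (f : EuclideanSpace ℝ (Fin p) → ℝ) (L : ℝ) (hL : 0 < L)
    (hdiff : Differentiable ℝ f)
    (hlip : ∀ u v, ‖gradient f u - gradient f v‖ ≤ L * ‖u - v‖)
    (α η γ₁ : ℝ) (hα : 0 < α) (hη : 0 < η) (hγ₁ : 0 < γ₁)
    (y y' z z' x x' e e' xbar : EuclideanSpace ℝ (Fin p))
    (hy' : y' = y + α • (xbar - x))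
    (hyz : y = z + η • gradient f z)
    (hy'z' : y' = z' + η • gradient f z')
    (hx : x = z + e) (hx' : x' = z' + e') :
    ‖xbar - x‖ ^ 2 ≤ (2 * (1 + η ^ 2 * L ^ 2) / α ^ 2) *
        ((1 + γ₁) * ‖x' - x‖ ^ 2 + (2 * (1 + γ₁) / γ₁) * (‖e'‖ ^ 2 + ‖e‖ ^ 2)) ∧
      (e = 0 → e' = 0 →
        ‖xbar - x‖ ^ 2 ≤ (2 * (1 + η ^ 2 * L ^ 2) / α ^ 2) * ‖x' - x‖ ^ 2) :=
  feddr_residual_bound_active_user_general (gradient f) L hlip α η γ₁ hα.ne' hγ₁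
    y y' z z' x x' e e' xbar hy' hyz hy'z' hx hx'
end

section
/- Gradient-mapping bound (Lemma A.3). Let η > 0 and γ₂ > 0. Suppose for each i = 1,…,n that y_i = z_i + η∇f_i(z_i) and x_i = z_i + e_i, and set x̄ := prox_{ηg}((1/n)Σ_{i=1}^n (2x_i − y_i)). Then ‖G_η(x̄)‖² ≤ ((1+ηL)²/(nη²)) Σ_{i=1}^n [(1+γ₂)‖x_i − x̄‖² + ((1+γ₂)/γ₂)‖e_i‖²]. In particular, if e_i = 0 for all i, then ‖G_η(x̄)‖² ≤ ((1+ηL)²/(nη²)) Σ_{i=1}^n ‖x_i − x̄‖². -/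
/-!
Both `x̄ = prox_{ηg}(v)`, with `v` the mean of the points `2xᵢ − yᵢ`, and the point subtracted
from `x̄` in the gradient mapping are proximal points, so nonexpansiveness of `prox_{ηg}` bounds
`η‖G_η(x̄)‖` by the distance of `v` to `x̄ − η∇f(x̄)`. The difference of these two points is the
mean of the vectors `(xᵢ − x̄) + eᵢ + η(∇fᵢ(x̄) − ∇fᵢ(zᵢ))`, each of norm at most
`(1 + ηL)(‖xᵢ − x̄‖ + ‖eᵢ‖)`. Jensen's inequality for the square and Young's inequality conclude.
-/

open Filter Finset Set Topology
open scoped NNReal RealInnerProductSpace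

theorem le_of_forall_mem_Ioo_le_add_mul {a b c : ℝ}
    (h : ∀ t ∈ Ioo (0 : ℝ) 1, a ≤ b + t * c) : a ≤ b := by
  have hlim : Tendsto (fun t : ℝ => b + t * c) (𝓝[>] 0) (𝓝 b) := by
    have hcont : Continuous fun t : ℝ => b + t * c := by fun_prop
    simpa only [zero_mul, add_zero] using (hcont.tendsto 0).mono_left nhdsWithin_le_nhds
  exact ge_of_tendsto hlim (eventually_of_mem (Ioo_mem_nhdsGT one_pos) h)

theorem add_sq_le_one_add_mul_sq_add {γ : ℝ} (hγ : 0 < γ) (a b : ℝ) :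
    (a + b) ^ 2 ≤ (1 + γ) * a ^ 2 + (1 + γ) / γ * b ^ 2 :=
  calc (a + b) ^ 2 = a ^ 2 + 2 * a * b + b ^ 2 := add_sq a b
    _ ≤ a ^ 2 + (γ * a ^ 2 + γ⁻¹ * b ^ 2) + b ^ 2 := by
        gcongr
        exact two_mul_le_add_mul_sq hγ
    _ = (1 + γ) * a ^ 2 + (1 + γ) / γ * b ^ 2 := by
        field_simp
        ring

theorem sq_norm_inv_card_smul_sum_le {ι E : Type*} [SeminormedAddCommGroup E] [NormedSpace ℝ E]
    (s : Finset ι) (v : ι → E) :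
    ‖(#s : ℝ)⁻¹ • ∑ i ∈ s, v i‖ ^ 2 ≤ (#s : ℝ)⁻¹ * ∑ i ∈ s, ‖v i‖ ^ 2 :=
  calc ‖(#s : ℝ)⁻¹ • ∑ i ∈ s, v i‖ ^ 2
      = (‖∑ i ∈ s, v i‖ / #s) ^ 2 := by
        rw [norm_smul, norm_inv, Real.norm_natCast, inv_mul_eq_div]
    _ ≤ ((∑ i ∈ s, ‖v i‖) / #s) ^ 2 := by
        gcongr
        exact norm_sum_le s v
    _ ≤ (∑ i ∈ s, ‖v i‖ ^ 2) / #s := sum_div_card_sq_le_sum_sq_div_card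
    _ = (#s : ℝ)⁻¹ * ∑ i ∈ s, ‖v i‖ ^ 2 := (inv_mul_eq_div _ _).symm

theorem inv_card_smul_sum_sub_forward {ι E : Type*} [Fintype ι] [Nonempty ι] [AddCommGroup E]
    [Module ℝ E] (F : ι → E → E) (v : ι → E) (η : ℝ) (u : E) :
    (Fintype.card ι : ℝ)⁻¹ • ∑ i, v i - (u - η • ((Fintype.card ι : ℝ)⁻¹ • ∑ i, F i u))
      = (Fintype.card ι : ℝ)⁻¹ • ∑ i, (v i - (u - η • F i u)) := by
  have hcard : (Fintype.card ι : ℝ) ≠ 0 := Nat.cast_ne_zero.2 Fintype.card_ne_zero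
  have hmean : (Fintype.card ι : ℝ)⁻¹ • ∑ _i : ι, u = u := by
    rw [sum_const, card_univ, ← Nat.cast_smul_eq_nsmul ℝ, inv_smul_smul₀ hcard]
  rw [sum_sub_distrib, sum_sub_distrib, smul_sub, smul_sub, hmean, ← smul_sum, smul_comm η]

section Prox

variable {E : Type*} [SeminormedAddCommGroup E] [InnerProductSpace ℝ E]

/-- `p` is a proximal point `prox_{ηg}(u)`. A function with values in `ℝ ∪ {+∞}` is encoded by its
effective domain `s` together with its finite values `g` on `s`. -/
structure IsProxOn (g : E → ℝ) (s : Set E) (η : ℝ) (u p : E) : Prop where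
  mem : p ∈ s
  isMinOn : IsMinOn (fun w => g w + (1 / (2 * η)) * ‖w - u‖ ^ 2) s p

namespace IsProxOn

variable {g : E → ℝ} {s : Set E} {η : ℝ} {u v p q w : E}

-- Compare the objective at `p` with its value at `p + t(w - p)`.
theorem add_inner_le_add_mul (hp : IsProxOn g s η u p) (hg : ConvexOn ℝ s g) (hw : w ∈ s)
    {t : ℝ} (ht : t ∈ Ioo (0 : ℝ) 1) :
    g p + η⁻¹ * ⟪u - p, w - p⟫ ≤ g w + t * (1 / (2 * η) * ‖w - p‖ ^ 2) := by
  obtain ⟨ht₀, ht₁⟩ := ht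
  have hmin := isMinOn_iff.1 hp.isMinOn _
    (hg.1 hp.mem hw (sub_nonneg.2 ht₁.le) ht₀.le (sub_add_cancel 1 t))
  have hconv := hg.2 hp.mem hw (sub_nonneg.2 ht₁.le) ht₀.le (sub_add_cancel 1 t)
  have hexpand : ‖(1 - t) • p + t • w - u‖ ^ 2
      = ‖p - u‖ ^ 2 - 2 * (t * ⟪u - p, w - p⟫) + t ^ 2 * ‖w - p‖ ^ 2 := by
    have hseg : (1 - t) • p + t • w - u = t • (w - p) - (u - p) := by module
    rw [hseg, norm_sub_sq_real, norm_smul, mul_pow, Real.norm_eq_abs, sq_abs, real_inner_smul_left,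
      real_inner_comm, norm_sub_rev u p]
    ring
  simp only [hexpand, smul_eq_mul] at hmin hconv
  refine le_of_mul_le_mul_left ?_ ht₀
  linear_combination hmin + hconv

theorem add_inner_le (hp : IsProxOn g s η u p) (hg : ConvexOn ℝ s g) (hw : w ∈ s) :
    g p + η⁻¹ * ⟪u - p, w - p⟫ ≤ g w :=
  le_of_forall_mem_Ioo_le_add_mul fun _ ht => hp.add_inner_le_add_mul hg hw ht

theorem sq_norm_sub_le_inner (hp : IsProxOn g s η u p) (hq : IsProxOn g s η v q)
    (hg : ConvexOn ℝ s g) (hη : 0 < η) : ‖p - q‖ ^ 2 ≤ ⟪u - v, p - q⟫ := by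
  have hsum : ⟪u - p, q - p⟫ + ⟪v - q, p - q⟫ = ‖p - q‖ ^ 2 - ⟪u - v, p - q⟫ := by
    rw [← real_inner_self_eq_norm_sq, ← neg_sub p q, inner_neg_right, ← inner_neg_left,
      ← inner_add_left, ← inner_sub_left]
    congr 1
    abel
  have hmonotone : η⁻¹ * (‖p - q‖ ^ 2 - ⟪u - v, p - q⟫) ≤ 0 := by
    rw [← hsum]
    linarith [hp.add_inner_le hg hq.mem, hq.add_inner_le hg hp.mem]
  exact sub_nonpos.1 (nonpos_of_mul_nonpos_right hmonotone (inv_pos.2 hη))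

theorem norm_sub_le (hp : IsProxOn g s η u p) (hq : IsProxOn g s η v q)
    (hg : ConvexOn ℝ s g) (hη : 0 < η) : ‖p - q‖ ≤ ‖u - v‖ := by
  have hfirm : ‖p - q‖ * ‖p - q‖ ≤ ‖u - v‖ * ‖p - q‖ := by
    rw [← sq]
    exact (hp.sq_norm_sub_le_inner hq hg hη).trans (real_inner_le_norm _ _)
  rcases (norm_nonneg (p - q)).eq_or_lt with hzero | hpos
  · exact hzero ▸ norm_nonneg _
  · exact le_of_mul_le_mul_right hfirm hpos

theorem lipschitzWith_one {prox : E → E} (hprox : ∀ u, IsProxOn g s η u (prox u))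
    (hg : ConvexOn ℝ s g) (hη : 0 < η) : LipschitzWith 1 prox :=
  LipschitzWith.mk_one fun u v => by
    simpa only [dist_eq_norm] using (hprox u).norm_sub_le (hprox v) hg hη

end IsProxOn

end Prox

section GradientMapping

variable {E : Type*} [SeminormedAddCommGroup E] [NormedSpace ℝ E]

/-- The gradient mapping `G_η(u) = (1/η)(u − prox_{ηg}(u − η∇f(u)))`, with a map `prox` in the role
of `prox_{ηg}` and an operator `F` in the role of `∇f`. -/
noncomputable def gradientMapping (prox F : E → E) (η : ℝ) (u : E) : E :=
  (1 / η) • (u - prox (u - η • F u))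

theorem norm_gradientMapping_apply_le {prox : E → E} (hprox : LipschitzWith 1 prox) (F : E → E)
    {η : ℝ} (hη : 0 ≤ η) (v : E) :
    ‖gradientMapping prox F η (prox v)‖ ≤ η⁻¹ * ‖v - (prox v - η • F (prox v))‖ := by
  rw [gradientMapping, norm_smul, one_div, norm_inv, Real.norm_of_nonneg hη]
  gcongr
  simpa using hprox.norm_sub_le v (prox v - η • F (prox v))

theorem norm_reflection_sub_forward_le {F : E → E} {L : ℝ≥0} (hF : LipschitzWith L F)
    {η : ℝ} (hη : 0 ≤ η) (x z u : E) :
    ‖((2 : ℝ) • x - (z + η • F z)) - (u - η • F u)‖ ≤ (1 + η * L) * (‖x - u‖ + ‖x - z‖) := by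
  have hdist : ‖u - z‖ ≤ ‖x - u‖ + ‖x - z‖ := by
    simpa only [norm_sub_rev u x] using norm_sub_le_norm_sub_add_norm_sub u x z
  calc ‖((2 : ℝ) • x - (z + η • F z)) - (u - η • F u)‖
      = ‖(x - u) + (x - z) + η • (F u - F z)‖ := by
        congr 1
        module
    _ ≤ ‖x - u‖ + ‖x - z‖ + η * ‖F u - F z‖ := by
        simpa only [norm_smul, Real.norm_of_nonneg hη] using
          norm_add₃_le (a := x - u) (b := x - z) (c := η • (F u - F z))
    _ ≤ ‖x - u‖ + ‖x - z‖ + η * (L * (‖x - u‖ + ‖x - z‖)) := by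
        gcongr
        exact (hF.norm_sub_le u z).trans (by gcongr)
    _ = (1 + η * L) * (‖x - u‖ + ‖x - z‖) := by ring

variable {ι : Type*} [Fintype ι] [Nonempty ι]

theorem sq_norm_gradientMapping_mean_le {prox : E → E} (hprox : LipschitzWith 1 prox)
    {F : ι → E → E} {L : ℝ≥0} (hF : ∀ i, LipschitzWith L (F i)) {η : ℝ} (hη : 0 ≤ η)
    (x z : ι → E) {xbar : E}
    (hxbar : xbar =
      prox ((Fintype.card ι : ℝ)⁻¹ • ∑ i, ((2 : ℝ) • x i - (z i + η • F i (z i))))) :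
    ‖gradientMapping prox (fun u => (Fintype.card ι : ℝ)⁻¹ • ∑ i, F i u) η xbar‖ ^ 2 ≤
      (1 + η * L) ^ 2 / (Fintype.card ι * η ^ 2) * ∑ i, (‖x i - xbar‖ + ‖x i - z i‖) ^ 2 := by
  set r : ι → E := fun i => ((2 : ℝ) • x i - (z i + η • F i (z i))) - (xbar - η • F i xbar)
  have hmapping :
      ‖gradientMapping prox (fun u => (Fintype.card ι : ℝ)⁻¹ • ∑ i, F i u) η xbar‖ ≤
        η⁻¹ * ‖(Fintype.card ι : ℝ)⁻¹ • ∑ i, r i‖ := by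
    rw [← inv_card_smul_sum_sub_forward, hxbar]
    exact norm_gradientMapping_apply_le hprox _ hη _
  calc ‖gradientMapping prox (fun u => (Fintype.card ι : ℝ)⁻¹ • ∑ i, F i u) η xbar‖ ^ 2
      ≤ η⁻¹ ^ 2 * ‖(Fintype.card ι : ℝ)⁻¹ • ∑ i, r i‖ ^ 2 := by
        rw [← mul_pow]
        gcongr
    _ ≤ η⁻¹ ^ 2 * ((Fintype.card ι : ℝ)⁻¹ * ∑ i, ‖r i‖ ^ 2) := by
        gcongr
        exact sq_norm_inv_card_smul_sum_le univ r
    _ ≤ η⁻¹ ^ 2 * ((Fintype.card ι : ℝ)⁻¹ *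
          ∑ i, ((1 + η * L) * (‖x i - xbar‖ + ‖x i - z i‖)) ^ 2) := by
        gcongr with i
        exact norm_reflection_sub_forward_le (hF i) hη (x i) (z i) xbar
    _ = (1 + η * L) ^ 2 / (Fintype.card ι * η ^ 2) *
          ∑ i, (‖x i - xbar‖ + ‖x i - z i‖) ^ 2 := by
        simp only [mul_pow, ← mul_sum]
        ring

end GradientMapping

theorem feddr_gradient_mapping_bound_general {ι E : Type*} [Fintype ι] [Nonempty ι]
    [SeminormedAddCommGroup E] [InnerProductSpace ℝ E]
    {F : ι → E → E} {L : ℝ≥0} (hF : ∀ i, LipschitzWith L (F i))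
    {g : E → ℝ} {s : Set E} (hg : ConvexOn ℝ s g) {η γ₂ : ℝ} (hη : 0 < η) (hγ₂ : 0 < γ₂)
    {prox : E → E} (hprox : ∀ u, IsProxOn g s η u (prox u))
    {y z x e : ι → E} (hy : ∀ i, y i = z i + η • F i (z i)) (hx : ∀ i, x i = z i + e i)
    {xbar : E} (hxbar : xbar = prox ((Fintype.card ι : ℝ)⁻¹ • ∑ i, ((2 : ℝ) • x i - y i))) :
    ‖gradientMapping prox (fun u => (Fintype.card ι : ℝ)⁻¹ • ∑ i, F i u) η xbar‖ ^ 2 ≤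
        (1 + η * L) ^ 2 / (Fintype.card ι * η ^ 2) *
          ∑ i, ((1 + γ₂) * ‖x i - xbar‖ ^ 2 + (1 + γ₂) / γ₂ * ‖e i‖ ^ 2) ∧
      ((∀ i, e i = 0) →
        ‖gradientMapping prox (fun u => (Fintype.card ι : ℝ)⁻¹ • ∑ i, F i u) η xbar‖ ^ 2 ≤
          (1 + η * L) ^ 2 / (Fintype.card ι * η ^ 2) * ∑ i, ‖x i - xbar‖ ^ 2) := by
  have he : ∀ i, x i - z i = e i := fun i => sub_eq_of_eq_add' (hx i)
  simp only [hy] at hxbar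
  have hbound := sq_norm_gradientMapping_mean_le (IsProxOn.lipschitzWith_one hprox hg hη) hF hη.le
    x z hxbar
  simp only [he] at hbound
  refine ⟨hbound.trans ?_, fun hzero => by simpa only [hzero, norm_zero, add_zero] using hbound⟩
  gcongr with i
  exact add_sq_le_one_add_mul_sq_add hγ₂ ‖x i - xbar‖ ‖e i‖

/-- **Gradient-mapping bound (Lemma A.3).**
Let `η, γ₂ > 0`, `yᵢ = zᵢ + η∇fᵢ(zᵢ)`, `xᵢ = zᵢ + eᵢ`, and
`x̄ := prox_{ηg}((1/n)Σᵢ(2xᵢ − yᵢ))`. Then, with `G_η(u) := (1/η)(u − prox_{ηg}(u − η∇f(u)))`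
and `∇f(u) = (1/n)Σᵢ∇fᵢ(u)`:
`‖G_η(x̄)‖² ≤ ((1+ηL)²/(nη²))Σᵢ[(1+γ₂)‖xᵢ − x̄‖² + ((1+γ₂)/γ₂)‖eᵢ‖²]`;
in particular, if all `eᵢ = 0`, `‖G_η(x̄)‖² ≤ ((1+ηL)²/(nη²))Σᵢ‖xᵢ − x̄‖²`. -/
theorem feddr_gradient_mapping_bound {pdim n : ℕ} (hn : 0 < n)
    (f : Fin n → EuclideanSpace ℝ (Fin pdim) → ℝ) (L : ℝ) (hL : 0 < L)
    (hdiff : ∀ i, Differentiable ℝ (f i))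
    (hlip : ∀ i u v, ‖gradient (f i) u - gradient (f i) v‖ ≤ L * ‖u - v‖)
    (g : EuclideanSpace ℝ (Fin pdim) → ℝ)
    (hgconv : ConvexOn ℝ Set.univ g) (hglsc : LowerSemicontinuous g)
    (η γ₂ : ℝ) (hη : 0 < η) (hγ₂ : 0 < γ₂)
    (proxg : EuclideanSpace ℝ (Fin pdim) → EuclideanSpace ℝ (Fin pdim))
    (hproxg : ∀ u, IsMinOn (fun w => g w + (1 / (2 * η)) * ‖w - u‖ ^ 2) Set.univ (proxg u))
    (hproxg_unique : ∀ u w,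
      IsMinOn (fun w' => g w' + (1 / (2 * η)) * ‖w' - u‖ ^ 2) Set.univ w → w = proxg u)
    (y z x e : Fin n → EuclideanSpace ℝ (Fin pdim))
    (hy : ∀ i, y i = z i + η • gradient (f i) (z i))
    (hx : ∀ i, x i = z i + e i)
    (xbar : EuclideanSpace ℝ (Fin pdim))
    (hxbar : xbar = proxg ((n : ℝ)⁻¹ • ∑ i, ((2 : ℝ) • x i - y i))) :
    ‖(1 / η) • (xbar -
          proxg (xbar - η • ((n : ℝ)⁻¹ • ∑ i, gradient (f i) xbar)))‖ ^ 2 ≤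
        ((1 + η * L) ^ 2 / (n * η ^ 2)) *
          ∑ i, ((1 + γ₂) * ‖x i - xbar‖ ^ 2 + ((1 + γ₂) / γ₂) * ‖e i‖ ^ 2) ∧
      ((∀ i, e i = 0) →
        ‖(1 / η) • (xbar -
            proxg (xbar - η • ((n : ℝ)⁻¹ • ∑ i, gradient (f i) xbar)))‖ ^ 2 ≤
          ((1 + η * L) ^ 2 / (n * η ^ 2)) * ∑ i, ‖x i - xbar‖ ^ 2) := by
  have := Fin.pos_iff_nonempty.1 hn
  lift L to ℝ≥0 using hL.le
  simpa only [gradientMapping, Fintype.card_fin] using feddr_gradient_mapping_bound_general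
    (fun i => lipschitzWith_iff_norm_sub_le.2 (hlip i)) hgconv hη hγ₂
    (fun u => ⟨Set.mem_univ _, hproxg u⟩) hy hx (by simpa only [Fintype.card_fin] using hxbar)
end

section
/- Lower bound on the Lyapunov function. Let 0 < η ≤ 1/L, x̄ ∈ dom g, and x₁,…,xₙ ∈ ℝ^p. Then V_η(x̄; x₁,…,xₙ) ≥ F(x̄) + ((1/η) − L)·(1/(2n)) Σ_{i=1}^n ‖x̄ − x_i‖² ≥ F⋆, where F⋆ := inf F is assumed finite. -/
open scoped RealInnerProductSpace

/-!
A differentiable function whose gradient is `L`-Lipschitz deviates from its linearization at `x` by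
at most `L / 2 * ‖y - x‖ ^ 2` at `y`. Applied to each `fᵢ` at `xᵢ`, this says that the quadratic
model of `fᵢ` with the larger curvature `1 / η` exceeds `fᵢ` at `x̄` by at least
`(1 / η - L) / 2 * ‖x̄ - xᵢ‖ ^ 2`. Averaging over `i` bounds the Lyapunov function from below, and
the excess is nonnegative because `L ≤ 1 / η`.
-/

open Set

section NormedSpace

variable {E G : Type*} [NormedAddCommGroup E] [NormedSpace ℝ E]
  [NormedAddCommGroup G] [NormedSpace ℝ G]

theorem norm_image_sub_sub_le_of_norm_hasFDerivWithin_sub_le {f : E → G} {f' : E → E →L[ℝ] G}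
    {s : Set E} {x y : E} {L : ℝ} (hs : StarConvex ℝ x s)
    (hf : ∀ z ∈ s, HasFDerivWithinAt f (f' z) s z)
    (hf' : ∀ z ∈ s, ‖f' z - f' x‖ ≤ L * ‖z - x‖) (hy : y ∈ s) :
    ‖f y - f x - f' x (y - x)‖ ≤ L / 2 * ‖y - x‖ ^ 2 := by
  let c : ℝ → E := AffineMap.lineMap x y
  let φ : ℝ → G := fun t ↦ f (c t) - f x - t • f' x (y - x)
  have hc : MapsTo c (Icc 0 1) s := by
    rw [mapsTo_iff_image_subset, ← segment_eq_image_lineMap]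
    exact hs.segment_subset hy
  have hφ : ∀ t ∈ Icc (0 : ℝ) 1,
      HasDerivWithinAt φ ((f' (c t) - f' x) (y - x)) (Icc 0 1) t := by
    intro t ht
    have hfc := (hf _ (hc ht)).comp_hasDerivWithinAt t AffineMap.hasDerivWithinAt_lineMap hc
    have hlin := (hasDerivWithinAt_id t (Icc 0 1)).smul_const (f' x (y - x))
    exact ((hfc.sub_const (f x)).sub hlin).congr_deriv (by rw [one_smul, sub_apply])
  have hB : ∀ t : ℝ, HasDerivAt (fun t ↦ L / 2 * ‖y - x‖ ^ 2 * t ^ 2) (L * ‖y - x‖ ^ 2 * t) t :=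
    fun t ↦ ((hasDerivAt_pow 2 t).const_mul _).congr_deriv (by push_cast; ring)
  have hbound : ∀ t ∈ Ico (0 : ℝ) 1, ‖(f' (c t) - f' x) (y - x)‖ ≤ L * ‖y - x‖ ^ 2 * t := by
    intro t ht
    have hct : ‖c t - x‖ = t * ‖y - x‖ := by
      rw [← dist_eq_norm, dist_lineMap_left, Real.norm_of_nonneg ht.1, dist_comm, dist_eq_norm]
    calc ‖(f' (c t) - f' x) (y - x)‖
        ≤ ‖f' (c t) - f' x‖ * ‖y - x‖ := ContinuousLinearMap.le_opNorm _ _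
      _ ≤ L * ‖c t - x‖ * ‖y - x‖ := by
          gcongr
          exact hf' _ (hc (Ico_subset_Icc_self ht))
      _ = L * ‖y - x‖ ^ 2 * t := by rw [hct]; ring
  have hφ_le := image_norm_le_of_norm_deriv_right_le_deriv_boundary
    (fun t ht ↦ (hφ t ht).continuousWithinAt)
    (fun t ht ↦ (hφ t (Ico_subset_Icc_self ht)).mono_of_mem_nhdsWithin (Icc_mem_nhdsGE_of_mem ht))
    (by simp [φ, c]) hB hbound (right_mem_Icc.2 zero_le_one)
  simpa [φ, c] using hφ_le

end NormedSpace

variable {E : Type*} [NormedAddCommGroup E] [InnerProductSpace ℝ E] [CompleteSpace E]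

theorem abs_sub_sub_inner_le_of_norm_hasGradientWithin_sub_le {f : E → ℝ} {f' : E → E} {s : Set E}
    {x y : E} {L : ℝ} (hs : StarConvex ℝ x s) (hf : ∀ z ∈ s, HasGradientWithinAt f (f' z) s z)
    (hf' : ∀ z ∈ s, ‖f' z - f' x‖ ≤ L * ‖z - x‖) (hy : y ∈ s) :
    |f y - f x - ⟪f' x, y - x⟫| ≤ L / 2 * ‖y - x‖ ^ 2 :=
  norm_image_sub_sub_le_of_norm_hasFDerivWithin_sub_le hs
    (fun z hz ↦ (hf z hz).hasFDerivWithinAt)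
    (fun z hz ↦ by simpa only [← map_sub, LinearIsometryEquiv.norm_map] using hf' z hz) hy

theorem le_add_inner_gradient_add_sq_of_norm_gradient_sub_le {f : E → ℝ} {x : E} {L : ℝ}
    (hf : Differentiable ℝ f) (hf' : ∀ z, ‖gradient f z - gradient f x‖ ≤ L * ‖z - x‖) (y : E) :
    f y ≤ f x + ⟪gradient f x, y - x⟫ + L / 2 * ‖y - x‖ ^ 2 := by
  have h := abs_sub_sub_inner_le_of_norm_hasGradientWithin_sub_le (starConvex_univ x)
    (fun z _ ↦ hasGradientWithinAt_univ.2 (hf z).hasGradientAt) (fun z _ ↦ hf' z) (mem_univ y)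
  linarith [le_of_abs_le h]

section Lyapunov

variable {ι : Type*} [Fintype ι]

/-- The composite objective `F = (1/n) ∑ᵢ fᵢ + g`, where `n` is the number of users `i : ι`. -/
noncomputable def averageObjective {X : Type*} (f : ι → X → ℝ) (g : X → ℝ) : X → ℝ :=
  fun u ↦ (Fintype.card ι : ℝ)⁻¹ * ∑ i, f i u + g u

/-- The Lyapunov function `V_η(x̄; x₁, …, xₙ)`: the objective at `x̄` with each `fᵢ` replaced by its
quadratic model of curvature `1 / η` around `xᵢ`. -/
noncomputable def lyapunovFunction (f : ι → E → ℝ) (g : E → ℝ) (η : ℝ) (xbar : E) (x : ι → E) : ℝ :=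
  g xbar + (Fintype.card ι : ℝ)⁻¹ * ∑ i,
    (f i (x i) + ⟪gradient (f i) (x i), xbar - x i⟫ + (1 / (2 * η)) * ‖xbar - x i‖ ^ 2)

variable {f : ι → E → ℝ} {L : ℝ}

theorem averageObjective_add_le_lyapunovFunction {x : ι → E} (hf : ∀ i, Differentiable ℝ (f i))
    (hf' : ∀ i z, ‖gradient (f i) z - gradient (f i) (x i)‖ ≤ L * ‖z - x i‖)
    (g : E → ℝ) (η : ℝ) (xbar : E) :
    averageObjective f g xbar
        + (1 / η - L) * (1 / (2 * Fintype.card ι)) * ∑ i, ‖xbar - x i‖ ^ 2 ≤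
      lyapunovFunction f g η xbar x := by
  have hmodel : ∀ i, f i xbar + (1 / η - L) / 2 * ‖xbar - x i‖ ^ 2 ≤
      f i (x i) + ⟪gradient (f i) (x i), xbar - x i⟫ + 1 / (2 * η) * ‖xbar - x i‖ ^ 2 := by
    intro i
    have hdescent := le_add_inner_gradient_add_sq_of_norm_gradient_sub_le (hf i) (hf' i) xbar
    linear_combination hdescent
  calc averageObjective f g xbar
        + (1 / η - L) * (1 / (2 * Fintype.card ι)) * ∑ i, ‖xbar - x i‖ ^ 2
      = g xbar + (Fintype.card ι : ℝ)⁻¹ *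
          ∑ i, (f i xbar + (1 / η - L) / 2 * ‖xbar - x i‖ ^ 2) := by
        rw [averageObjective, Finset.sum_add_distrib, ← Finset.mul_sum]
        ring
    _ ≤ lyapunovFunction f g η xbar x := by
        unfold lyapunovFunction
        gcongr _ + _ * ?_
        exact Finset.sum_le_sum fun i _ ↦ hmodel i

/-- A regularizer with values in `ℝ ∪ {+∞}` is encoded by its effective domain `D` and a real-valued
`g` that agrees with it on `D`; the infimum of `F` is then the infimum over `D`. -/
theorem feddr_lyapunov_lower_bound_general [Nonempty ι] (hdiff : ∀ i, Differentiable ℝ (f i))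
    (hlip : ∀ i u v, ‖gradient (f i) u - gradient (f i) v‖ ≤ L * ‖u - v‖)
    {g : E → ℝ} {D : Set E} {η : ℝ} (hη₀ : 0 < η) (hη : η * L ≤ 1)
    {Fstar : ℝ} (hFstar : IsGLB (averageObjective f g '' D) Fstar)
    {xbar : E} (hxbar : xbar ∈ D) (x : ι → E) :
    averageObjective f g xbar
        + (1 / η - L) * (1 / (2 * Fintype.card ι)) * ∑ i, ‖xbar - x i‖ ^ 2 ≤
      lyapunovFunction f g η xbar x ∧
    Fstar ≤ averageObjective f g xbar
        + (1 / η - L) * (1 / (2 * Fintype.card ι)) * ∑ i, ‖xbar - x i‖ ^ 2 := by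
  refine ⟨averageObjective_add_le_lyapunovFunction hdiff (fun i z ↦ hlip i z (x i)) g η xbar, ?_⟩
  have hcurvature : 0 ≤ 1 / η - L := sub_nonneg.2 ((le_div_iff₀' hη₀).2 hη)
  have hFstar_le : Fstar ≤ averageObjective f g xbar := hFstar.1 (mem_image_of_mem _ hxbar)
  exact hFstar_le.trans (le_add_of_nonneg_right (by positivity))

end Lyapunov

/-- **Lower bound on the Lyapunov function.**
For `0 < η ≤ 1/L`, any `x̄` and `x₁,…,xₙ`:
`V_η(x̄; x₁,…,xₙ) ≥ F(x̄) + ((1/η) − L)(1/(2n))Σᵢ‖x̄ − xᵢ‖² ≥ F⋆`, where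
`V_η(x̄; x) := g(x̄) + (1/n)Σᵢ[fᵢ(xᵢ) + ⟨∇fᵢ(xᵢ), x̄ − xᵢ⟩ + (1/(2η))‖x̄ − xᵢ‖²]`,
`F := (1/n)Σᵢ fᵢ + g` and `F⋆ := inf F` is finite. -/
theorem feddr_lyapunov_lower_bound {pdim n : ℕ} (hn : 0 < n)
    (f : Fin n → EuclideanSpace ℝ (Fin pdim) → ℝ) (L : ℝ) (hL : 0 < L)
    (hdiff : ∀ i, Differentiable ℝ (f i))
    (hlip : ∀ i u v, ‖gradient (f i) u - gradient (f i) v‖ ≤ L * ‖u - v‖)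
    (g : EuclideanSpace ℝ (Fin pdim) → ℝ)
    (hgconv : ConvexOn ℝ Set.univ g) (hglsc : LowerSemicontinuous g)
    (η : ℝ) (hη0 : 0 < η) (hη : η ≤ 1 / L)
    (Fstar : ℝ)
    (hFstar : IsGLB (Set.range fun u => (n : ℝ)⁻¹ * ∑ i, f i u + g u) Fstar)
    (xbar : EuclideanSpace ℝ (Fin pdim)) (x : Fin n → EuclideanSpace ℝ (Fin pdim)) :
    ((n : ℝ)⁻¹ * ∑ i, f i xbar + g xbar)
        + ((1 / η) - L) * (1 / (2 * n)) * ∑ i, ‖xbar - x i‖ ^ 2 ≤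
      g xbar + (n : ℝ)⁻¹ * ∑ i,
        (f i (x i) + ⟪gradient (f i) (x i), xbar - x i⟫ + (1 / (2 * η)) * ‖xbar - x i‖ ^ 2) ∧
    Fstar ≤ ((n : ℝ)⁻¹ * ∑ i, f i xbar + g xbar)
        + ((1 / η) - L) * (1 / (2 * n)) * ∑ i, ‖xbar - x i‖ ^ 2 := by
  have : Nonempty (Fin n) := ⟨0, hn⟩
  simpa only [averageObjective, lyapunovFunction, Fintype.card_fin] using
    feddr_lyapunov_lower_bound_general hdiff hlip hη0 ((le_div_iff₀ hL).1 hη)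
      (by unfold averageObjective; simpa only [image_univ, Fintype.card_fin] using hFstar)
      (mem_univ xbar) x
end

section
/- Server-step contraction under a single-block update (eq. (asdr_eq5_2b)). Let η > 0 and suppose for all i and for j ∈ {k, k+1}: y_i^j = x_i^j + η∇f_i(x_i^j), x̂_i^j = 2x_i^j − y_i^j, x̄^j = prox_{ηg}((1/n)Σ_{i=1}^n x̂_i^j), and x̂_i^{k+1} = x̂_i^k for every i ≠ i_k (only block i_k changes). Then ‖x̄^{k+1} − x̄^k‖² ≤ (2(1+η²L²)/n²)‖x_{i_k}^{k+1} − x_{i_k}^k‖². -/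
/-!
A proximal point `p` of `u` is characterised by `⟪u - p, q - p⟫ ≤ η (g q - g p)`, the first-order
condition along the segments issuing from `p`. Adding two such inequalities makes the proximal map
firmly nonexpansive, so the server step moves no further than the average of the `x̂ᵢ`. That average
moves by `1/n` times the change of the single active `x̂ᵢ = xᵢ - η ∇fᵢ(xᵢ)`, whose square is at most
`2 (1 + η²L²) ‖xᵢ' - xᵢ‖²` by `(a + b)² ≤ 2 (a² + b²)`.
-/

section Prox

open Filter Topology

variable {E : Type*} [SeminormedAddCommGroup E] [InnerProductSpace ℝ E]
  {s : Set E} {g : E → ℝ} {η : ℝ} {u v p q : E}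

/-- `p` is a proximal point of `u`, that is `p = prox_{ηg}(u)`. The set `s` is the effective domain
of `g`: an extended-valued function is encoded by its finite values on `s`, and `p` minimizes over
`s`. -/
def IsProxPoint (s : Set E) (g : E → ℝ) (η : ℝ) (u p : E) : Prop :=
  p ∈ s ∧ IsMinOn (fun w => g w + (1 / (2 * η)) * ‖w - u‖ ^ 2) s p

namespace IsProxPoint

lemma inner_le_add_of_pos_of_le_one (hp : IsProxPoint s g η u p) (hg : ConvexOn ℝ s g)
    (hη : 0 < η) (hq : q ∈ s) {t : ℝ} (ht : 0 < t) (ht1 : t ≤ 1) :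
    inner ℝ (u - p) (q - p) ≤ η * (g q - g p) + t * (‖q - p‖ ^ 2 / 2) := by
  have hmin : g p + 1 / (2 * η) * ‖p - u‖ ^ 2 ≤
      g ((1 - t) • p + t • q) + 1 / (2 * η) * ‖(1 - t) • p + t • q - u‖ ^ 2 :=
    hp.2 (hg.1 hp.1 hq (sub_nonneg.2 ht1) ht.le (by ring))
  have hconv : g ((1 - t) • p + t • q) ≤ (1 - t) * g p + t * g q :=
    hg.2 hp.1 hq (sub_nonneg.2 ht1) ht.le (by ring)
  have hexpand : ‖(1 - t) • p + t • q - u‖ ^ 2 =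
      ‖p - u‖ ^ 2 - 2 * t * inner ℝ (u - p) (q - p) + t ^ 2 * ‖q - p‖ ^ 2 := by
    rw [show (1 - t) • p + t • q - u = t • (q - p) - (u - p) by module, norm_sub_sq_real,
      norm_smul, real_inner_smul_left, mul_pow, Real.norm_eq_abs, sq_abs, norm_sub_rev u p,
      real_inner_comm]
    ring
  rw [hexpand] at hmin
  have hscaled : t * inner ℝ (u - p) (q - p) ≤
      t * (η * (g q - g p) + t * (‖q - p‖ ^ 2 / 2)) := by
    have hsum := mul_le_mul_of_nonneg_left (hmin.trans (add_le_add_left hconv _)) hη.le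
    field_simp at hsum
    linarith
  exact le_of_mul_le_mul_left hscaled ht

lemma inner_le (hp : IsProxPoint s g η u p) (hg : ConvexOn ℝ s g) (hη : 0 < η) (hq : q ∈ s) :
    inner ℝ (u - p) (q - p) ≤ η * (g q - g p) := by
  have hlim : Tendsto (fun t : ℝ => η * (g q - g p) + t * (‖q - p‖ ^ 2 / 2)) (𝓝[>] 0)
      (𝓝 (η * (g q - g p) + 0 * (‖q - p‖ ^ 2 / 2))) :=
    (Continuous.tendsto (by fun_prop) 0).mono_left nhdsWithin_le_nhds
  rw [zero_mul, add_zero] at hlim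
  refine ge_of_tendsto hlim ?_
  filter_upwards [Ioc_mem_nhdsGT one_pos] with t ht
  exact hp.inner_le_add_of_pos_of_le_one hg hη hq ht.1 ht.2

lemma norm_sub_sq_le_inner (hp : IsProxPoint s g η u p) (hq : IsProxPoint s g η v q)
    (hg : ConvexOn ℝ s g) (hη : 0 < η) : ‖p - q‖ ^ 2 ≤ inner ℝ (u - v) (p - q) := by
  have hpq := hp.inner_le hg hη hq.1
  have hqp := hq.inner_le hg hη hp.1
  have hsum : inner ℝ (u - p) (q - p) + inner ℝ (v - q) (p - q) =
      ‖p - q‖ ^ 2 - inner ℝ (u - v) (p - q) := by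
    rw [← neg_sub p q, inner_neg_right, neg_add_eq_sub, ← inner_sub_left,
      ← real_inner_self_eq_norm_sq, ← inner_sub_left]
    congr 1
    abel
  linarith

lemma norm_sub_le (hp : IsProxPoint s g η u p) (hq : IsProxPoint s g η v q)
    (hg : ConvexOn ℝ s g) (hη : 0 < η) : ‖p - q‖ ≤ ‖u - v‖ := by
  have hmul : ‖p - q‖ ^ 2 ≤ ‖u - v‖ * ‖p - q‖ :=
    (hp.norm_sub_sq_le_inner hq hg hη).trans (real_inner_le_norm _ _)
  nlinarith [norm_nonneg (p - q), norm_nonneg (u - v)]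

end IsProxPoint

end Prox

lemma sum_sub_sum_eq_of_forall_ne {ι M : Type*} [Fintype ι] [AddCommGroup M] {a b : ι → M}
    {i₀ : ι} (h : ∀ i, i ≠ i₀ → a i = b i) : ∑ i, a i - ∑ i, b i = a i₀ - b i₀ := by
  rw [← Finset.sum_sub_distrib]
  exact Fintype.sum_eq_single i₀ fun i hi => sub_eq_zero.2 (h i hi)

lemma norm_sub_smul_sub_sq_le {E : Type*} [SeminormedAddCommGroup E] [NormedSpace ℝ E]
    {x x' d d' : E} {L : ℝ} (h : ‖d' - d‖ ≤ L * ‖x' - x‖) (η : ℝ) :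
    ‖(x' - η • d') - (x - η • d)‖ ^ 2 ≤ 2 * (1 + η ^ 2 * L ^ 2) * ‖x' - x‖ ^ 2 :=
  calc ‖(x' - η • d') - (x - η • d)‖ ^ 2
      = ‖(x' - x) - η • (d' - d)‖ ^ 2 := by congr 2; module
    _ ≤ (‖x' - x‖ + ‖η • (d' - d)‖) ^ 2 := by gcongr; exact norm_sub_le _ _
    _ ≤ 2 * (‖x' - x‖ ^ 2 + ‖η • (d' - d)‖ ^ 2) := add_sq_le
    _ = 2 * (‖x' - x‖ ^ 2 + η ^ 2 * ‖d' - d‖ ^ 2) := by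
      rw [norm_smul, mul_pow, Real.norm_eq_abs, sq_abs]
    _ ≤ 2 * (‖x' - x‖ ^ 2 + η ^ 2 * (L * ‖x' - x‖) ^ 2) := by gcongr
    _ = 2 * (1 + η ^ 2 * L ^ 2) * ‖x' - x‖ ^ 2 := by ring

theorem asyncFedDR_server_step_contraction_general {E ι : Type*} [SeminormedAddCommGroup E]
    [InnerProductSpace ℝ E] [Fintype ι] (G : ι → E → E) (L : ℝ)
    (hlip : ∀ i u v, ‖G i u - G i v‖ ≤ L * ‖u - v‖)
    (s : Set E) (g : E → ℝ) (hg : ConvexOn ℝ s g) (η : ℝ) (hη : 0 < η)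
    (x x' y y' xhat xhat' : ι → E) (xbar xbar' : E) (i₀ : ι)
    (hy : ∀ i, y i = x i + η • G i (x i)) (hy' : ∀ i, y' i = x' i + η • G i (x' i))
    (hxhat : ∀ i, xhat i = (2 : ℝ) • x i - y i) (hxhat' : ∀ i, xhat' i = (2 : ℝ) • x' i - y' i)
    (hxbar : IsProxPoint s g η ((Fintype.card ι : ℝ)⁻¹ • ∑ i, xhat i) xbar)
    (hxbar' : IsProxPoint s g η ((Fintype.card ι : ℝ)⁻¹ • ∑ i, xhat' i) xbar')
    (honeblock : ∀ i, i ≠ i₀ → xhat' i = xhat i) :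
    ‖xbar' - xbar‖ ^ 2 ≤
      (2 * (1 + η ^ 2 * L ^ 2) / (Fintype.card ι : ℝ) ^ 2) * ‖x' i₀ - x i₀‖ ^ 2 := by
  have hstep : xhat i₀ = x i₀ - η • G i₀ (x i₀) := by rw [hxhat, hy]; module
  have hstep' : xhat' i₀ = x' i₀ - η • G i₀ (x' i₀) := by rw [hxhat', hy']; module
  calc ‖xbar' - xbar‖ ^ 2
      ≤ ‖(Fintype.card ι : ℝ)⁻¹ • ∑ i, xhat' i - (Fintype.card ι : ℝ)⁻¹ • ∑ i, xhat i‖ ^ 2 := by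
        gcongr
        exact hxbar'.norm_sub_le hxbar hg hη
    _ = ‖xhat' i₀ - xhat i₀‖ ^ 2 / (Fintype.card ι : ℝ) ^ 2 := by
        rw [← smul_sub, sum_sub_sum_eq_of_forall_ne honeblock, norm_smul, norm_inv,
          RCLike.norm_natCast, mul_pow, inv_pow, inv_mul_eq_div]
    _ ≤ 2 * (1 + η ^ 2 * L ^ 2) * ‖x' i₀ - x i₀‖ ^ 2 / (Fintype.card ι : ℝ) ^ 2 := by
        rw [hstep, hstep']
        gcongr
        exact norm_sub_smul_sub_sq_le (hlip i₀ _ _) η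
    _ = 2 * (1 + η ^ 2 * L ^ 2) / (Fintype.card ι : ℝ) ^ 2 * ‖x' i₀ - x i₀‖ ^ 2 :=
        (div_mul_eq_mul_div _ _ _).symm

/-- **Server-step contraction under a single-block update (eq. (asdr_eq5_2b)).**
If at two consecutive iterations `y_i = x_i + η∇f_i(x_i)`, `x̂_i = 2x_i − y_i`,
`x̄ = prox_{ηg}((1/n)Σᵢ x̂_i)`, and only the block `i₀` changes, then
`‖x̄' − x̄‖² ≤ (2(1+η²L²)/n²)‖x'_{i₀} − x_{i₀}‖²`. -/
theorem asyncFedDR_server_step_contraction {pdim n : ℕ} (hn : 0 < n)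
    (f : Fin n → EuclideanSpace ℝ (Fin pdim) → ℝ) (L : ℝ) (hL : 0 < L)
    (hdiff : ∀ i, Differentiable ℝ (f i))
    (hlip : ∀ i u v, ‖gradient (f i) u - gradient (f i) v‖ ≤ L * ‖u - v‖)
    (g : EuclideanSpace ℝ (Fin pdim) → ℝ)
    (hgconv : ConvexOn ℝ Set.univ g) (hglsc : LowerSemicontinuous g)
    (η : ℝ) (hη : 0 < η)
    (proxg : EuclideanSpace ℝ (Fin pdim) → EuclideanSpace ℝ (Fin pdim))
    (hproxg : ∀ u, IsMinOn (fun w => g w + (1 / (2 * η)) * ‖w - u‖ ^ 2) Set.univ (proxg u))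
    (hproxg_unique : ∀ u w,
      IsMinOn (fun w' => g w' + (1 / (2 * η)) * ‖w' - u‖ ^ 2) Set.univ w → w = proxg u)
    (x x' y y' xhat xhat' : Fin n → EuclideanSpace ℝ (Fin pdim))
    (xbar xbar' : EuclideanSpace ℝ (Fin pdim)) (i₀ : Fin n)
    (hy : ∀ i, y i = x i + η • gradient (f i) (x i))
    (hy' : ∀ i, y' i = x' i + η • gradient (f i) (x' i))
    (hxhat : ∀ i, xhat i = (2 : ℝ) • x i - y i)
    (hxhat' : ∀ i, xhat' i = (2 : ℝ) • x' i - y' i)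
    (hxbar : xbar = proxg ((n : ℝ)⁻¹ • ∑ i, xhat i))
    (hxbar' : xbar' = proxg ((n : ℝ)⁻¹ • ∑ i, xhat' i))
    (honeblock : ∀ i, i ≠ i₀ → xhat' i = xhat i) :
    ‖xbar' - xbar‖ ^ 2 ≤ (2 * (1 + η ^ 2 * L ^ 2) / (n : ℝ) ^ 2) * ‖x' i₀ - x i₀‖ ^ 2 := by
  subst hxbar hxbar'
  simpa only [Fintype.card_fin] using
    asyncFedDR_server_step_contraction_general (fun i => gradient (f i)) L hlip Set.univ g hgconv
      η hη x x' y y' xhat xhat' _ _ i₀ hy hy' hxhat hxhat' ⟨Set.mem_univ _, hproxg _⟩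
      ⟨Set.mem_univ _, hproxg _⟩ honeblock
end

section
/- Residual bound for asyncFedDR (Lemma B.3 / eq. (asdr_thm_eq11)). Consider the asynchronous FedDR process as a stochastic process with filtration F_j = σ((î_0, d̂⁰),…,(î_j, d̂^j)), delays bounded by τ with d̂^j_{î_j} = 0, and suppose for every user i and iteration k there exists t ∈ {0,…,T} with P(î_{k+t} = i | F_{k+t−1}) ≥ p̂ almost surely, where p̂ > 0. Let D := [8α²(1+L²η²)(τ² + 2Tnp̂) + 8n²(1+L²η² + Tα²p̂)]/(p̂α²n²). Then for every k ≥ τ: Σ_{i=1}^n E[‖x̄^k − x_i^k‖²] ≤ D · Σ_{t=k−τ}^{k+T} E[‖x_{î_t}^{t+1} − x_{î_t}^t‖²]. -/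
open MeasureTheory ProbabilityTheory

/-
Along one trajectory, a user activated at time `l` moves by an amount comparable to its residual
`x̄ˡ − xᵢˡ`, because `α (x̄ˡ − xᵢˡ)` is the increment of `yᵢ = xᵢ + η ∇fᵢ(xᵢ)`. Moreover the server
variable is a nonexpansive function of an average in which a single summand changes per iteration.
Hence the residual of user `i` at time `k` is controlled by its residual at a time `rᵢ` in the
window `[k, k + T]` and by the increments made during the window. Choosing for `rᵢ` a time at
which, given the past, user `i` is activated with probability at least `p̂`, the expected residual
at time `rᵢ` costs a factor `1 / p̂` over its part on the event `î_{rᵢ} = i`. On these events the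
times `rᵢ` are distinct for distinct users, so each increment is charged at most once.
-/

open scoped Topology

section Prox

lemma add_sq_norm_sub_le_of_isMinOn_of_strongConvexOn {E : Type*} [NormedAddCommGroup E]
    [NormedSpace ℝ E] {s : Set E} {m : ℝ} {φ : E → ℝ} {p q : E} (hφ : StrongConvexOn s m φ)
    (hmin : IsMinOn φ s p) (hp : p ∈ s) (hq : q ∈ s) :
    φ p + m / 2 * ‖p - q‖ ^ 2 ≤ φ q := by
  have hsegment : ∀ t ∈ Set.Ioc (0 : ℝ) 1, φ p + (1 - t) * (m / 2 * ‖p - q‖ ^ 2) ≤ φ q := by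
    rintro t ⟨ht, ht1⟩
    have hle : φ p ≤ φ ((1 - t) • p + t • q) :=
      hmin (hφ.1 hp hq (sub_nonneg.2 ht1) ht.le (sub_add_cancel 1 t))
    have hconv := hφ.2 hp hq (sub_nonneg.2 ht1) ht.le (sub_add_cancel 1 t)
    simp only [smul_eq_mul] at hconv
    refine le_of_mul_le_mul_left ?_ ht
    linarith
  have hlim : Filter.Tendsto (fun t : ℝ ↦ φ p + (1 - t) * (m / 2 * ‖p - q‖ ^ 2)) (𝓝[>] 0)
      (𝓝 (φ p + m / 2 * ‖p - q‖ ^ 2)) :=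
    tendsto_nhdsWithin_of_tendsto_nhds (Continuous.tendsto' (by fun_prop) _ _ (by simp))
  exact le_of_tendsto hlim (Filter.mem_of_superset (Ioc_mem_nhdsGT one_pos) hsegment)

variable {E : Type*} [NormedAddCommGroup E] [InnerProductSpace ℝ E] {s : Set E} {g : E → ℝ}

lemma strongConvexOn_add_sq_norm_sub (hg : ConvexOn ℝ s g) (c : ℝ) (u : E) :
    StrongConvexOn s (2 * c) (fun w ↦ g w + c * ‖w - u‖ ^ 2) := by
  have haffine : ConvexOn ℝ s fun w ↦ (-(2 * c) • innerₛₗ ℝ u) w + c * ‖u‖ ^ 2 :=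
    (LinearMap.convexOn _ hg.1).add_const _
  refine strongConvexOn_iff_convex.2 ((hg.add haffine).congr fun w _ ↦ ?_)
  simp only [Pi.add_apply, LinearMap.smul_apply, innerₛₗ_apply_apply, smul_eq_mul,
    norm_sub_sq_real, real_inner_comm]
  ring

lemma lipschitzWith_one_of_isMinOn_add_sq_norm_sub (hg : ConvexOn ℝ s g) {c : ℝ} (hc : 0 < c)
    {P : E → E} (hPs : ∀ u, P u ∈ s)
    (hP : ∀ u, IsMinOn (fun w ↦ g w + c * ‖w - u‖ ^ 2) s (P u)) : LipschitzWith 1 P := by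
  refine LipschitzWith.mk_one fun u v ↦ ?_
  rw [dist_eq_norm, dist_eq_norm]
  have hu := add_sq_norm_sub_le_of_isMinOn_of_strongConvexOn
    (strongConvexOn_add_sq_norm_sub hg c u) (hP u) (hPs u) (hPs v)
  have hv := add_sq_norm_sub_le_of_isMinOn_of_strongConvexOn
    (strongConvexOn_add_sq_norm_sub hg c v) (hP v) (hPs v) (hPs u)
  have hcross : ‖P v - u‖ ^ 2 - ‖P u - u‖ ^ 2 + (‖P u - v‖ ^ 2 - ‖P v - v‖ ^ 2)
      = 2 * inner ℝ (u - v) (P u - P v) := by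
    simp only [norm_sub_sq_real, inner_sub_left, inner_sub_right, real_inner_comm]
    ring
  have hfirm : ‖P u - P v‖ * ‖P u - P v‖ ≤ ‖u - v‖ * ‖P u - P v‖ := by
    refine le_trans (le_of_mul_le_mul_left ?_ hc) (real_inner_le_norm (u - v) (P u - P v))
    rw [norm_sub_rev (P v) (P u)] at hv
    linear_combination hu / 2 + hv / 2 + c / 2 * hcross
  by_contra! hlt
  exact hfirm.not_gt (mul_lt_mul_of_pos_right hlt ((norm_nonneg _).trans_lt hlt))

end Prox

section Estimates

lemma norm_add_smul_sq_le_s14 {E : Type*} [SeminormedAddCommGroup E] [NormedSpace ℝ E] {L : ℝ}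
    {u v : E} (h : ‖v‖ ≤ L * ‖u‖) (η : ℝ) :
    ‖u + η • v‖ ^ 2 ≤ 2 * (1 + L ^ 2 * η ^ 2) * ‖u‖ ^ 2 :=
  calc ‖u + η • v‖ ^ 2 ≤ (‖u‖ + ‖η • v‖) ^ 2 := by gcongr; exact norm_add_le _ _
    _ ≤ 2 * (‖u‖ ^ 2 + ‖η • v‖ ^ 2) := add_sq_le
    _ = 2 * (‖u‖ ^ 2 + η ^ 2 * ‖v‖ ^ 2) := by
      rw [norm_smul, mul_pow, Real.norm_eq_abs, sq_abs]
    _ ≤ 2 * (‖u‖ ^ 2 + η ^ 2 * (L * ‖u‖) ^ 2) := by gcongr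
    _ = 2 * (1 + L ^ 2 * η ^ 2) * ‖u‖ ^ 2 := by ring

lemma norm_add_sub_sq_le {E : Type*} [SeminormedAddCommGroup E] (u v w : E) :
    ‖u + (v - w)‖ ^ 2 ≤ 2 * ‖u‖ ^ 2 + 4 * (‖v‖ ^ 2 + ‖w‖ ^ 2) :=
  calc ‖u + (v - w)‖ ^ 2 ≤ (‖u‖ + (‖v‖ + ‖w‖)) ^ 2 := by
        gcongr
        exact norm_add_le_of_le le_rfl (norm_sub_le v w)
    _ ≤ 2 * (‖u‖ ^ 2 + 2 * (‖v‖ ^ 2 + ‖w‖ ^ 2)) := add_sq_le.trans (by gcongr; exact add_sq_le)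
    _ = 2 * ‖u‖ ^ 2 + 4 * (‖v‖ ^ 2 + ‖w‖ ^ 2) := by ring

lemma norm_sub_sq_le_mul_sum_Icc {E : Type*} [SeminormedAddCommGroup E] (a : ℕ → E) {k T l : ℕ}
    (hl : l ∈ Finset.Icc k (k + T)) :
    ‖a k - a l‖ ^ 2 ≤ T * ∑ j ∈ Finset.Icc k (k + T), ‖a (j + 1) - a j‖ ^ 2 := by
  obtain ⟨hkl, hlT⟩ := Finset.mem_Icc.1 hl
  have hcard : ((Finset.Ico k l).card : ℝ) ≤ T := by
    rw [Nat.card_Ico]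
    exact_mod_cast Nat.sub_le_iff_le_add'.2 hlT
  calc ‖a k - a l‖ ^ 2 ≤ (∑ j ∈ Finset.Ico k l, ‖a (j + 1) - a j‖) ^ 2 := by
        gcongr
        simpa only [dist_eq_norm, norm_sub_rev] using dist_le_Ico_sum_dist a hkl
    _ ≤ (Finset.Ico k l).card * ∑ j ∈ Finset.Ico k l, ‖a (j + 1) - a j‖ ^ 2 :=
        sq_sum_le_card_mul_sum_sq
    _ ≤ T * ∑ j ∈ Finset.Icc k (k + T), ‖a (j + 1) - a j‖ ^ 2 := by
        gcongr
        exact fun j hj ↦ Finset.Icc_subset_Icc_right hlT (Finset.Ico_subset_Icc_self hj)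

lemma sum_filter_leftInverse_le_sum {ι κ : Type*} [Fintype ι] [DecidableEq ι] {s : κ → ι}
    {r : ι → κ} {I : Finset κ} (hr : ∀ i, r i ∈ I) {a : κ → ℝ} (ha : ∀ l, 0 ≤ a l) :
    ∑ i with s (r i) = i, a (r i) ≤ ∑ l ∈ I, a l := by
  classical
  have hinj : Set.InjOn r ({i | s (r i) = i} : Finset ι) := by
    intro i hi j hj hij
    rw [← (Finset.mem_filter.1 hi).2, hij, (Finset.mem_filter.1 hj).2]
  rw [← Finset.sum_image (f := a) hinj]
  exact Finset.sum_le_sum_of_subset_of_nonneg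
    (Finset.image_subset_iff.2 fun i _ ↦ hr i) fun l _ _ ↦ ha l

end Estimates

section Trajectory

variable {ι E : Type*} [Fintype ι] [NormedAddCommGroup E] [NormedSpace ℝ E]

/-- One trajectory of asynchronous (Fed) Douglas–Rachford iterates in which the active user `s k`
sees the current server variable. The operators `G i` play the role of `∇fᵢ` and `P` that of
`prox_{ηg}`; the auxiliary variables are eliminated through `yᵢ = xᵢ + η Gᵢ(xᵢ)` and
`x̂ᵢ = 2xᵢ − yᵢ = xᵢ − η Gᵢ(xᵢ)`. -/
structure IsAsyncDRPath (G : ι → E → E) (P : E → E) (α η : ℝ) (s : ℕ → ι) (x : ℕ → ι → E)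
    (xbar : ℕ → E) : Prop where
  active_step : ∀ k, x (k + 1) (s k) + η • G (s k) (x (k + 1) (s k)) =
    x k (s k) + η • G (s k) (x k (s k)) + α • (xbar k - x k (s k))
  idle_step : ∀ k i, i ≠ s k → x (k + 1) i = x k i
  server_eq : ∀ k, xbar k = P ((Fintype.card ι : ℝ)⁻¹ • ∑ i, (x k i - η • G i (x k i)))

namespace IsAsyncDRPath

variable {G : ι → E → E} {P : E → E} {L α η : ℝ} {s : ℕ → ι} {x : ℕ → ι → E} {xbar : ℕ → E}

lemma sq_norm_active_residual_le (h : IsAsyncDRPath G P α η s x xbar)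
    (hG : ∀ i u v, ‖G i u - G i v‖ ≤ L * ‖u - v‖) (k : ℕ) :
    α ^ 2 * ‖xbar k - x k (s k)‖ ^ 2 ≤
      2 * (1 + L ^ 2 * η ^ 2) * ‖x (k + 1) (s k) - x k (s k)‖ ^ 2 := by
  have hinc : α • (xbar k - x k (s k)) = (x (k + 1) (s k) - x k (s k)) +
      η • (G (s k) (x (k + 1) (s k)) - G (s k) (x k (s k))) := by
    rw [← sub_eq_of_eq_add' (h.active_step k)]
    module
  calc α ^ 2 * ‖xbar k - x k (s k)‖ ^ 2 = ‖α • (xbar k - x k (s k))‖ ^ 2 := by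
        rw [norm_smul, mul_pow, Real.norm_eq_abs, sq_abs]
    _ ≤ 2 * (1 + L ^ 2 * η ^ 2) * ‖x (k + 1) (s k) - x k (s k)‖ ^ 2 :=
        hinc ▸ norm_add_smul_sq_le_s14 (hG _ _ _) η

lemma sq_norm_server_step_le (h : IsAsyncDRPath G P α η s x xbar)
    (hG : ∀ i u v, ‖G i u - G i v‖ ≤ L * ‖u - v‖) (hP : LipschitzWith 1 P) (k : ℕ) :
    ‖xbar (k + 1) - xbar k‖ ^ 2 ≤ 2 * (1 + L ^ 2 * η ^ 2) / Fintype.card ι ^ 2 *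
      ‖x (k + 1) (s k) - x k (s k)‖ ^ 2 := by
  set δ := (x (k + 1) (s k) - x k (s k)) +
    (-η) • (G (s k) (x (k + 1) (s k)) - G (s k) (x k (s k))) with hδ
  have hsum : ∑ i, (x (k + 1) i - η • G i (x (k + 1) i)) - ∑ i, (x k i - η • G i (x k i)) = δ := by
    rw [← Finset.sum_sub_distrib, Fintype.sum_eq_single (s k) fun i hi ↦ by
      rw [h.idle_step k i hi, sub_self], hδ]
    module
  have hstep : ‖xbar (k + 1) - xbar k‖ ≤ (Fintype.card ι : ℝ)⁻¹ * ‖δ‖ := by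
    rw [h.server_eq, h.server_eq, ← hsum]
    refine (hP.norm_sub_le _ _).trans_eq ?_
    rw [NNReal.coe_one, one_mul, ← smul_sub, norm_smul, Real.norm_of_nonneg (by positivity)]
  calc ‖xbar (k + 1) - xbar k‖ ^ 2 ≤ ((Fintype.card ι : ℝ)⁻¹ * ‖δ‖) ^ 2 := by gcongr
    _ ≤ ((Fintype.card ι : ℝ)⁻¹) ^ 2 *
        (2 * (1 + L ^ 2 * (-η) ^ 2) * ‖x (k + 1) (s k) - x k (s k)‖ ^ 2) := by
        rw [mul_pow]
        gcongr
        exact norm_add_smul_sq_le_s14 (hG _ _ _) (-η)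
    _ = _ := by ring

lemma sq_norm_server_drift_le (h : IsAsyncDRPath G P α η s x xbar)
    (hG : ∀ i u v, ‖G i u - G i v‖ ≤ L * ‖u - v‖) (hP : LipschitzWith 1 P) {k T l : ℕ}
    (hl : l ∈ Finset.Icc k (k + T)) :
    ‖xbar k - xbar l‖ ^ 2 ≤ 2 * T * (1 + L ^ 2 * η ^ 2) / Fintype.card ι ^ 2 *
      ∑ j ∈ Finset.Icc k (k + T), ‖x (j + 1) (s j) - x j (s j)‖ ^ 2 :=
  calc ‖xbar k - xbar l‖ ^ 2
      ≤ T * ∑ j ∈ Finset.Icc k (k + T), ‖xbar (j + 1) - xbar j‖ ^ 2 :=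
        norm_sub_sq_le_mul_sum_Icc xbar hl
    _ ≤ T * ∑ j ∈ Finset.Icc k (k + T), 2 * (1 + L ^ 2 * η ^ 2) / Fintype.card ι ^ 2 *
          ‖x (j + 1) (s j) - x j (s j)‖ ^ 2 := by
        gcongr with j
        exact h.sq_norm_server_step_le hG hP j
    _ = _ := by
        rw [← Finset.mul_sum]
        ring

lemma sum_sq_norm_user_drift_le (h : IsAsyncDRPath G P α η s x xbar) {k T : ℕ} {r : ι → ℕ}
    (hr : ∀ i, r i ∈ Finset.Icc k (k + T)) :
    ∑ i, ‖x k i - x (r i) i‖ ^ 2 ≤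
      T * ∑ l ∈ Finset.Icc k (k + T), ‖x (l + 1) (s l) - x l (s l)‖ ^ 2 :=
  calc ∑ i, ‖x k i - x (r i) i‖ ^ 2
      ≤ ∑ i, T * ∑ l ∈ Finset.Icc k (k + T), ‖x (l + 1) i - x l i‖ ^ 2 :=
        Finset.sum_le_sum fun i _ ↦ norm_sub_sq_le_mul_sum_Icc (fun l ↦ x l i) (hr i)
    _ = T * ∑ l ∈ Finset.Icc k (k + T), ∑ i, ‖x (l + 1) i - x l i‖ ^ 2 := by
        rw [← Finset.mul_sum, Finset.sum_comm]
    _ = T * ∑ l ∈ Finset.Icc k (k + T), ‖x (l + 1) (s l) - x l (s l)‖ ^ 2 := by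
        congr! 2 with l
        exact Fintype.sum_eq_single (s l) fun i hi ↦ by simp [h.idle_step l i hi]

lemma sum_sq_norm_residual_le (h : IsAsyncDRPath G P α η s x xbar)
    (hG : ∀ i u v, ‖G i u - G i v‖ ≤ L * ‖u - v‖) (hP : LipschitzWith 1 P) {k T : ℕ} {r : ι → ℕ}
    (hr : ∀ i, r i ∈ Finset.Icc k (k + T)) :
    ∑ i, ‖xbar k - x k i‖ ^ 2 ≤ 2 * ∑ i, ‖xbar (r i) - x (r i) i‖ ^ 2 +
      (8 * T * (1 + L ^ 2 * η ^ 2) / Fintype.card ι + 4 * T) *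
        ∑ l ∈ Finset.Icc k (k + T), ‖x (l + 1) (s l) - x l (s l)‖ ^ 2 := by
  set S := ∑ l ∈ Finset.Icc k (k + T), ‖x (l + 1) (s l) - x l (s l)‖ ^ 2
  set V := 2 * T * (1 + L ^ 2 * η ^ 2) / Fintype.card ι ^ 2 * S with hV
  have hsplit : ∀ i, ‖xbar k - x k i‖ ^ 2 ≤
      2 * ‖xbar (r i) - x (r i) i‖ ^ 2 + 4 * (V + ‖x k i - x (r i) i‖ ^ 2) := by
    intro i
    have hresidual : xbar k - x k i =
        (xbar (r i) - x (r i) i) + ((xbar k - xbar (r i)) - (x k i - x (r i) i)) := by abel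
    rw [hresidual]
    refine (norm_add_sub_sq_le _ _ _).trans ?_
    gcongr
    exact h.sq_norm_server_drift_le hG hP (hr i)
  have hcard : Fintype.card ι * V = 2 * T * (1 + L ^ 2 * η ^ 2) / Fintype.card ι * S := by
    have : Nonempty ι := ⟨s 0⟩
    rw [hV]
    field_simp
  calc ∑ i, ‖xbar k - x k i‖ ^ 2
      ≤ ∑ i, (2 * ‖xbar (r i) - x (r i) i‖ ^ 2 + 4 * (V + ‖x k i - x (r i) i‖ ^ 2)) :=
        Finset.sum_le_sum fun i _ ↦ hsplit i
    _ = 2 * ∑ i, ‖xbar (r i) - x (r i) i‖ ^ 2 +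
          4 * (Fintype.card ι * V + ∑ i, ‖x k i - x (r i) i‖ ^ 2) := by
        simp only [Finset.sum_add_distrib, ← Finset.mul_sum, Finset.sum_const, Finset.card_univ,
          nsmul_eq_mul]
    _ ≤ 2 * ∑ i, ‖xbar (r i) - x (r i) i‖ ^ 2 + 4 * (Fintype.card ι * V + T * S) := by
        gcongr
        exact h.sum_sq_norm_user_drift_le hr
    _ = _ := by
        rw [hcard]
        ring

lemma sum_active_sq_norm_residual_le [DecidableEq ι] (h : IsAsyncDRPath G P α η s x xbar)
    (hG : ∀ i u v, ‖G i u - G i v‖ ≤ L * ‖u - v‖) {I : Finset ℕ} {r : ι → ℕ} (hr : ∀ i, r i ∈ I) :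
    α ^ 2 * ∑ i with s (r i) = i, ‖xbar (r i) - x (r i) i‖ ^ 2 ≤
      2 * (1 + L ^ 2 * η ^ 2) * ∑ l ∈ I, ‖x (l + 1) (s l) - x l (s l)‖ ^ 2 :=
  calc α ^ 2 * ∑ i with s (r i) = i, ‖xbar (r i) - x (r i) i‖ ^ 2
      = ∑ i with s (r i) = i, α ^ 2 * ‖xbar (r i) - x (r i) (s (r i))‖ ^ 2 := by
        rw [Finset.mul_sum]
        refine Finset.sum_congr rfl fun i hi ↦ ?_
        rw [(Finset.mem_filter.1 hi).2]
    _ ≤ ∑ l ∈ I, α ^ 2 * ‖xbar l - x l (s l)‖ ^ 2 :=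
        sum_filter_leftInverse_le_sum (a := fun l ↦ α ^ 2 * ‖xbar l - x l (s l)‖ ^ 2) hr
          fun _ ↦ by positivity
    _ ≤ 2 * (1 + L ^ 2 * η ^ 2) * ∑ l ∈ I, ‖x (l + 1) (s l) - x l (s l)‖ ^ 2 := by
        rw [Finset.mul_sum]
        exact Finset.sum_le_sum fun l _ ↦ h.sq_norm_active_residual_le hG l

end IsAsyncDRPath

end Trajectory

section Expectation

lemma mul_integral_le_setIntegral_of_le_condExp {Ω : Type*} {m m₀ : MeasurableSpace Ω}
    {μ : Measure Ω} [IsFiniteMeasure μ] (hm : m ≤ m₀) {A : Set Ω} (hA : MeasurableSet[m₀] A)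
    {p : ℝ} (hp : ∀ᵐ ω ∂μ, p ≤ (μ⟦A | m⟧) ω) {Z : Ω → ℝ} (hZ0 : 0 ≤ Z)
    (hZm : AEStronglyMeasurable[m] Z μ) (hZ : Integrable Z μ) :
    p * ∫ ω, Z ω ∂μ ≤ ∫ ω in A, Z ω ∂μ := by
  have hZA : Z * A.indicator (fun _ ↦ (1 : ℝ)) = A.indicator Z := by
    ext ω
    by_cases hω : ω ∈ A <;> simp [hω]
  have hpull := condExp_mul_of_aestronglyMeasurable_left hZm (hZA ▸ hZ.indicator hA)
    ((integrable_const (1 : ℝ)).indicator hA)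
  rw [← integral_indicator hA, ← hZA,
    ← integral_condExp hm (f := Z * A.indicator fun _ ↦ 1), ← integral_const_mul]
  refine integral_mono_ae (hZ.const_mul p) integrable_condExp ?_
  filter_upwards [hpull, hp] with ω hω hpω
  rw [hω, Pi.mul_apply, mul_comm]
  exact mul_le_mul_of_nonneg_left hpω (hZ0 ω)

variable {ι E Ω : Type*} [Fintype ι] [NormedAddCommGroup E] [NormedSpace ℝ E]
  {m₀ : MeasurableSpace Ω} {μ : Measure Ω} {G : ι → E → E} {P : E → E} {L α η : ℝ}
  {s : ℕ → Ω → ι} {x : ℕ → ι → Ω → E} {xbar : ℕ → Ω → E} {k T : ℕ} {r : ι → ℕ}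

lemma sum_integral_residual_le (hG : ∀ i u v, ‖G i u - G i v‖ ≤ L * ‖u - v‖)
    (hP : LipschitzWith 1 P)
    (hpath : ∀ᵐ ω ∂μ, IsAsyncDRPath G P α η (s · ω) (x · · ω) (xbar · ω))
    (hres : ∀ k i, Integrable (fun ω ↦ ‖xbar k ω - x k i ω‖ ^ 2) μ)
    (hinc : ∀ l, Integrable (fun ω ↦ ‖x (l + 1) (s l ω) ω - x l (s l ω) ω‖ ^ 2) μ)
    (hr : ∀ i, r i ∈ Finset.Icc k (k + T)) :
    ∑ i, ∫ ω, ‖xbar k ω - x k i ω‖ ^ 2 ∂μ ≤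
      2 * ∑ i, ∫ ω, ‖xbar (r i) ω - x (r i) i ω‖ ^ 2 ∂μ +
        (8 * T * (1 + L ^ 2 * η ^ 2) / Fintype.card ι + 4 * T) *
          ∑ l ∈ Finset.Icc k (k + T), ∫ ω, ‖x (l + 1) (s l ω) ω - x l (s l ω) ω‖ ^ 2 ∂μ := by
  have hZ := (integrable_finsetSum Finset.univ fun i _ ↦ hres (r i) i).const_mul 2
  have hS := (integrable_finsetSum (Finset.Icc k (k + T)) fun l _ ↦ hinc l).const_mul
    (8 * T * (1 + L ^ 2 * η ^ 2) / Fintype.card ι + 4 * T)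
  rw [← integral_finsetSum _ fun i _ ↦ hres k i, ← integral_finsetSum _ fun i _ ↦ hres (r i) i,
    ← integral_finsetSum _ fun l _ ↦ hinc l, ← integral_const_mul, ← integral_const_mul,
    ← integral_add hZ hS]
  refine integral_mono_ae (integrable_finsetSum _ fun i _ ↦ hres k i) (hZ.add hS) ?_
  filter_upwards [hpath] with ω hω using hω.sum_sq_norm_residual_le hG hP hr

lemma sum_setIntegral_active_residual_le (hG : ∀ i u v, ‖G i u - G i v‖ ≤ L * ‖u - v‖)
    (hpath : ∀ᵐ ω ∂μ, IsAsyncDRPath G P α η (s · ω) (x · · ω) (xbar · ω))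
    (hs : ∀ l i, MeasurableSet {ω | s l ω = i})
    (hres : ∀ k i, Integrable (fun ω ↦ ‖xbar k ω - x k i ω‖ ^ 2) μ)
    (hinc : ∀ l, Integrable (fun ω ↦ ‖x (l + 1) (s l ω) ω - x l (s l ω) ω‖ ^ 2) μ)
    {I : Finset ℕ} (hr : ∀ i, r i ∈ I) :
    α ^ 2 * ∑ i, ∫ ω in {ω | s (r i) ω = i}, ‖xbar (r i) ω - x (r i) i ω‖ ^ 2 ∂μ ≤
      2 * (1 + L ^ 2 * η ^ 2) *
        ∑ l ∈ I, ∫ ω, ‖x (l + 1) (s l ω) ω - x l (s l ω) ω‖ ^ 2 ∂μ := by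
  classical
  have hactive := fun i ↦ (hres (r i) i).indicator (hs (r i) i)
  have hS := (integrable_finsetSum I fun l _ ↦ hinc l).const_mul (2 * (1 + L ^ 2 * η ^ 2))
  simp only [← integral_indicator (hs _ _)]
  rw [← integral_finsetSum _ fun i _ ↦ hactive i, ← integral_finsetSum _ fun l _ ↦ hinc l,
    ← integral_const_mul, ← integral_const_mul]
  refine integral_mono_ae ((integrable_finsetSum _ fun i _ ↦ hactive i).const_mul _) hS ?_
  filter_upwards [hpath] with ω hω
  simpa only [Set.indicator_apply, Set.mem_ofPred_eq, Finset.sum_filter] using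
    hω.sum_active_sq_norm_residual_le hG hr

theorem asyncFedDR_residual_bound_general [IsFiniteMeasure μ]
    (hG : ∀ i u v, ‖G i u - G i v‖ ≤ L * ‖u - v‖) (hP : LipschitzWith 1 P) (hα : α ≠ 0)
    {p : ℝ} (hp : 0 < p) {past : ℕ → MeasurableSpace Ω} (hpast : ∀ l, past l ≤ m₀)
    (hs : ∀ l i, MeasurableSet {ω | s l ω = i})
    (hpath : ∀ᵐ ω ∂μ, IsAsyncDRPath G P α η (s · ω) (x · · ω) (xbar · ω))
    (hadapt : ∀ l i, AEStronglyMeasurable[past l] (fun ω ↦ ‖xbar l ω - x l i ω‖ ^ 2) μ)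
    (hact : ∀ i, ∃ l ∈ Finset.Icc k (k + T), ∀ᵐ ω ∂μ, p ≤ (μ⟦{ω' | s l ω' = i} | past l⟧) ω)
    (hres : ∀ l i, Integrable (fun ω ↦ ‖xbar l ω - x l i ω‖ ^ 2) μ)
    (hinc : ∀ l, Integrable (fun ω ↦ ‖x (l + 1) (s l ω) ω - x l (s l ω) ω‖ ^ 2) μ) :
    ∑ i, ∫ ω, ‖xbar k ω - x k i ω‖ ^ 2 ∂μ ≤
      (4 * (1 + L ^ 2 * η ^ 2) / (p * α ^ 2) +
          8 * T * (1 + L ^ 2 * η ^ 2) / Fintype.card ι + 4 * T) *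
        ∑ l ∈ Finset.Icc k (k + T), ∫ ω, ‖x (l + 1) (s l ω) ω - x l (s l ω) ω‖ ^ 2 ∂μ := by
  choose r hr hrp using hact
  have hcond : p * ∑ i, ∫ ω, ‖xbar (r i) ω - x (r i) i ω‖ ^ 2 ∂μ ≤
      ∑ i, ∫ ω in {ω | s (r i) ω = i}, ‖xbar (r i) ω - x (r i) i ω‖ ^ 2 ∂μ := by
    rw [Finset.mul_sum]
    exact Finset.sum_le_sum fun i _ ↦ mul_integral_le_setIntegral_of_le_condExp (hpast _)
      (hs _ _) (hrp i) (fun ω ↦ by positivity) (hadapt _ _) (hres _ _)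
  have hactive := sum_setIntegral_active_residual_le hG hpath hs hres hinc hr
  have hdrift := sum_integral_residual_le hG hP hpath hres hinc hr
  set S := ∑ l ∈ Finset.Icc k (k + T), ∫ ω, ‖x (l + 1) (s l ω) ω - x l (s l ω) ω‖ ^ 2 ∂μ
  set Z := ∑ i, ∫ ω, ‖xbar (r i) ω - x (r i) i ω‖ ^ 2 ∂μ
  have hZ : Z ≤ 2 * (1 + L ^ 2 * η ^ 2) / (p * α ^ 2) * S := by
    have hα2 : 0 < α ^ 2 := by positivity
    rw [div_mul_eq_mul_div, le_div_iff₀ (by positivity)]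
    linarith [mul_le_mul_of_nonneg_left hcond hα2.le]
  calc ∑ i, ∫ ω, ‖xbar k ω - x k i ω‖ ^ 2 ∂μ
      ≤ 2 * Z + (8 * T * (1 + L ^ 2 * η ^ 2) / Fintype.card ι + 4 * T) * S := hdrift
    _ ≤ 2 * (2 * (1 + L ^ 2 * η ^ 2) / (p * α ^ 2) * S) +
          (8 * T * (1 + L ^ 2 * η ^ 2) / Fintype.card ι + 4 * T) * S := by gcongr
    _ = _ := by ring

end Expectation

section History

variable {Ω β : Type*}

/-- The σ-algebra `F_j` generated by the observations `ξ 0, …, ξ j`, all sets of values being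
measurable. -/
abbrev history (ξ : ℕ → Ω → β) (j : ℕ) : MeasurableSpace Ω :=
  ⨆ l ∈ Finset.range (j + 1), MeasurableSpace.comap (ξ l) ⊤

/-- The σ-algebra `F_{j-1}` of the events preceding iteration `j`. As the initial iterates may be
random, `past ξ 0` is the whole ambient σ-algebra. -/
abbrev past [m₀ : MeasurableSpace Ω] (ξ : ℕ → Ω → β) : ℕ → MeasurableSpace Ω
  | 0 => m₀
  | j + 1 => history ξ j

variable {ξ : ℕ → Ω → β}

lemma measurableSet_history (j : ℕ) (B : Set β) : MeasurableSet[history ξ j] (ξ j ⁻¹' B) :=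
  le_iSup₂_of_le (f := fun l (_ : l ∈ Finset.range (j + 1)) ↦ MeasurableSpace.comap (ξ l) ⊤) j
    (Finset.self_mem_range_succ j) le_rfl _ ⟨B, trivial, rfl⟩

variable [m₀ : MeasurableSpace Ω] {μ : Measure Ω}

lemma history_le (hξ : ∀ l, Measurable[m₀, ⊤] (ξ l)) (j : ℕ) : history ξ j ≤ m₀ :=
  iSup₂_le fun l _ ↦ (hξ l).comap_le

lemma past_le (hξ : ∀ l, Measurable[m₀, ⊤] (ξ l)) : ∀ j, past ξ j ≤ m₀
  | 0 => le_rfl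
  | j + 1 => history_le hξ j

-- At `j = 0` the truncated index makes the hypothesis condition on `F_0`, which contains the event
-- itself, so that both conditional expectations are its indicator.
lemma ae_le_condExp_past [IsFiniteMeasure μ] (hξ : ∀ l, Measurable[m₀, ⊤] (ξ l))
    {p : ℝ} {j : ℕ} {B : Set β} (h : ∀ᵐ ω ∂μ, p ≤ (μ⟦ξ j ⁻¹' B | history ξ (j - 1)⟧) ω) :
    ∀ᵐ ω ∂μ, p ≤ (μ⟦ξ j ⁻¹' B | past ξ j⟧) ω := by
  cases j with
  | succ j => exact h
  | zero =>
    have hB : MeasurableSet[history ξ 0] (ξ 0 ⁻¹' B) := measurableSet_history 0 B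
    have hint : Integrable ((ξ 0 ⁻¹' B).indicator fun _ ↦ (1 : ℝ)) μ :=
      (integrable_const 1).indicator (history_le hξ 0 _ hB)
    rw [condExp_of_stronglyMeasurable (history_le hξ 0)
      (stronglyMeasurable_const.indicator hB) hint] at h
    rwa [condExp_of_stronglyMeasurable (past_le hξ 0)
      (stronglyMeasurable_const.indicator (history_le hξ 0 _ hB)) hint]

lemma exists_mem_Icc_ae_le_condExp_past [IsFiniteMeasure μ] (hξ : ∀ l, Measurable[m₀, ⊤] (ξ l))
    {p : ℝ} {k T : ℕ} {B : Set β}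
    (h : ∃ t ≤ T, ∀ᵐ ω ∂μ, p ≤ (μ⟦ξ (k + t) ⁻¹' B | history ξ (k + t - 1)⟧) ω) :
    ∃ l ∈ Finset.Icc k (k + T), ∀ᵐ ω ∂μ, p ≤ (μ⟦ξ l ⁻¹' B | past ξ l⟧) ω := by
  obtain ⟨t, ht, hp⟩ := h
  exact ⟨k + t, Finset.mem_Icc.2 ⟨Nat.le_add_right k t, Nat.add_le_add_left ht k⟩,
    ae_le_condExp_past hξ hp⟩

lemma aestronglyMeasurable_past_sq_norm_sub {E : Type*} [NormedAddCommGroup E]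
    [MeasurableSpace E] [BorelSpace E] [SecondCountableTopology E] {u v : ℕ → Ω → E}
    (h0 : AEStronglyMeasurable (fun ω ↦ ‖u 0 ω - v 0 ω‖ ^ 2) μ)
    (hu : ∀ j, Measurable[history ξ j] (u (j + 1)))
    (hv : ∀ j, Measurable[history ξ j] (v (j + 1))) :
    ∀ j, AEStronglyMeasurable[past ξ j] (fun ω ↦ ‖u j ω - v j ω‖ ^ 2) μ
  | 0 => h0
  | j + 1 => ((measurable_norm.comp ((hu j).sub (hv j))).pow_const 2).aestronglyMeasurable

end History

section AsyncFedDR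

lemma ae_isAsyncDRPath {ι E Ω : Type*} [Fintype ι] [NormedAddCommGroup E] [NormedSpace ℝ E]
    [MeasurableSpace Ω] {μ : Measure Ω} {G : ι → E → E} {P : E → E} {α η : ℝ} {ihat : ℕ → Ω → ι}
    {d : ℕ → Ω → ι → ℕ} {y x xhat : ℕ → ι → Ω → E} {xbar : ℕ → Ω → E}
    (hdelay : ∀ k ω, d k ω (ihat k ω) = 0)
    (hy : ∀ j, ∀ᵐ ω ∂μ, ∀ i, y j i ω = x j i ω + η • G i (x j i ω))
    (hxhat : ∀ j, ∀ᵐ ω ∂μ, ∀ i, xhat j i ω = (2 : ℝ) • x j i ω - y j i ω)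
    (hxbar : ∀ j, ∀ᵐ ω ∂μ, xbar j ω = P ((Fintype.card ι : ℝ)⁻¹ • ∑ i, xhat j i ω))
    (hactive : ∀ k, ∀ᵐ ω ∂μ, y (k + 1) (ihat k ω) ω = y k (ihat k ω) ω +
      α • (xbar (k - d k ω (ihat k ω)) ω - x k (ihat k ω) ω))
    (hidle : ∀ k, ∀ᵐ ω ∂μ, ∀ i, i ≠ ihat k ω → x (k + 1) i ω = x k i ω) :
    ∀ᵐ ω ∂μ, IsAsyncDRPath G P α η (ihat · ω) (x · · ω) (xbar · ω) := by
  filter_upwards [ae_all_iff.2 hy, ae_all_iff.2 hxhat, ae_all_iff.2 hxbar, ae_all_iff.2 hactive,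
    ae_all_iff.2 hidle] with ω hy hxhat hxbar hactive hidle
  refine ⟨fun k ↦ ?_, hidle, fun k ↦ ?_⟩
  · rw [← hy, ← hy, hactive, hdelay, Nat.sub_zero]
  · rw [hxbar]
    congr! 3 with i
    rw [hxhat, hy]
    module

lemma asyncFedDR_general_const_le_const {L α η p N : ℝ} (hα : α ≠ 0) (hp : 0 < p)
    (hN : 0 < N) (τ T : ℕ) :
    4 * (1 + L ^ 2 * η ^ 2) / (p * α ^ 2) + 8 * T * (1 + L ^ 2 * η ^ 2) / N + 4 * T ≤
      (8 * α ^ 2 * (1 + L ^ 2 * η ^ 2) * ((τ : ℝ) ^ 2 + 2 * T * N * p)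
        + 8 * N ^ 2 * (1 + L ^ 2 * η ^ 2 + T * α ^ 2 * p)) / (p * α ^ 2 * N ^ 2) := by
  rw [← sub_nonneg]
  have hgap : (8 * α ^ 2 * (1 + L ^ 2 * η ^ 2) * ((τ : ℝ) ^ 2 + 2 * T * N * p)
        + 8 * N ^ 2 * (1 + L ^ 2 * η ^ 2 + T * α ^ 2 * p)) / (p * α ^ 2 * N ^ 2) -
      (4 * (1 + L ^ 2 * η ^ 2) / (p * α ^ 2) + 8 * T * (1 + L ^ 2 * η ^ 2) / N + 4 * T) =
      4 * (1 + L ^ 2 * η ^ 2) / (p * α ^ 2) + 8 * T * (1 + L ^ 2 * η ^ 2) / N + 4 * T +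
        8 * (1 + L ^ 2 * η ^ 2) * (τ : ℝ) ^ 2 / (p * N ^ 2) := by
    field_simp
    ring
  rw [hgap]
  positivity

end AsyncFedDR

/-- **Residual bound for asyncFedDR (Lemma B.3 / eq. (asdr_thm_eq11)).**
For the asynchronous FedDR process with delays bounded by `τ`, `d̂^j_{î_j} = 0`, and
conditional activation probabilities bounded below by `p̂` within a window of length `T`,
one has for every `k ≥ τ`:
`Σᵢ E[‖x̄ᵏ − xᵢᵏ‖²] ≤ D Σ_{t=k−τ}^{k+T} E[‖x_{î_t}^{t+1} − x_{î_t}^t‖²]` with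
`D := [8α²(1+L²η²)(τ² + 2Tnp̂) + 8n²(1+L²η² + Tα²p̂)]/(p̂α²n²)`. -/
theorem asyncFedDR_residual_bound {pdim n : ℕ} (hn : 0 < n)
    (f : Fin n → EuclideanSpace ℝ (Fin pdim) → ℝ) (L : ℝ) (hL : 0 < L)
    (hdiff : ∀ i, Differentiable ℝ (f i))
    (hlip : ∀ i u v, ‖gradient (f i) u - gradient (f i) v‖ ≤ L * ‖u - v‖)
    (g : EuclideanSpace ℝ (Fin pdim) → ℝ)
    (hgconv : ConvexOn ℝ Set.univ g) (hglsc : LowerSemicontinuous g)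
    (α η : ℝ) (hα : 0 < α) (hη : 0 < η)
    (τ T : ℕ) (phat : ℝ) (hphat : 0 < phat)
    (proxg : EuclideanSpace ℝ (Fin pdim) → EuclideanSpace ℝ (Fin pdim))
    (hproxg : ∀ u, IsMinOn (fun w => g w + (1 / (2 * η)) * ‖w - u‖ ^ 2) Set.univ (proxg u))
    (hproxg_unique : ∀ u w,
      IsMinOn (fun w' => g w' + (1 / (2 * η)) * ‖w' - u‖ ^ 2) Set.univ w → w = proxg u)
    -- the asynchronous probabilistic model
    {Ω : Type*} [MeasurableSpace Ω] (μ : Measure Ω) [IsProbabilityMeasure μ]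
    (ihat : ℕ → Ω → Fin n) (d : ℕ → Ω → Fin n → ℕ)
    (hξmeas : ∀ k, @Measurable Ω (Fin n × (Fin n → ℕ)) _ ⊤ (fun ω => (ihat k ω, d k ω)))
    (hdelay : ∀ k ω i, d k ω i ≤ τ ∧ d k ω i ≤ k)
    (hdelay_active : ∀ k ω, d k ω (ihat k ω) = 0)
    (hact : ∀ i : Fin n, ∀ k : ℕ, ∃ t ≤ T, ∀ᵐ ω ∂μ,
      phat ≤ (μ[Set.indicator {ω' | ihat (k + t) ω' = i} (fun _ => (1 : ℝ)) |
        ⨆ l ∈ Finset.range (k + t - 1 + 1),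
          MeasurableSpace.comap (fun ω' => (ihat l ω', d l ω'))
            (⊤ : MeasurableSpace (Fin n × (Fin n → ℕ)))]) ω)
    -- the iterates of the process
    (y x xhat : ℕ → Fin n → Ω → EuclideanSpace ℝ (Fin pdim))
    (xbar : ℕ → Ω → EuclideanSpace ℝ (Fin pdim))
    (hy : ∀ j, ∀ᵐ ω ∂μ, ∀ i, y j i ω = x j i ω + η • gradient (f i) (x j i ω))
    (hxhat : ∀ j, ∀ᵐ ω ∂μ, ∀ i, xhat j i ω = (2 : ℝ) • x j i ω - y j i ω)
    (hxbar : ∀ j, ∀ᵐ ω ∂μ, xbar j ω = proxg ((n : ℝ)⁻¹ • ∑ i, xhat j i ω))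
    (hstep : ∀ k, ∀ᵐ ω ∂μ,
      (y (k + 1) (ihat k ω) ω = y k (ihat k ω) ω
          + α • (xbar (k - d k ω (ihat k ω)) ω - x k (ihat k ω) ω) ∧
        IsMinOn (fun u => f (ihat k ω) u
            + (1 / (2 * η)) * ‖u - y (k + 1) (ihat k ω) ω‖ ^ 2)
          Set.univ (x (k + 1) (ihat k ω) ω)) ∧
      (∀ i, i ≠ ihat k ω →
        y (k + 1) i ω = y k i ω ∧ x (k + 1) i ω = x k i ω ∧
        xhat (k + 1) i ω = xhat k i ω))
    -- adaptedness: the step-(k+1) iterates are `F_k`-measurable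
    (hadapt : ∀ k,
      Measurable[⨆ l ∈ Finset.range (k + 1),
        MeasurableSpace.comap (fun ω => (ihat l ω, d l ω))
          (⊤ : MeasurableSpace (Fin n × (Fin n → ℕ)))] (xbar (k + 1)) ∧
      ∀ i,
        Measurable[⨆ l ∈ Finset.range (k + 1),
          MeasurableSpace.comap (fun ω => (ihat l ω, d l ω))
            (⊤ : MeasurableSpace (Fin n × (Fin n → ℕ)))] (fun ω => x (k + 1) i ω) ∧
        Measurable[⨆ l ∈ Finset.range (k + 1),
          MeasurableSpace.comap (fun ω => (ihat l ω, d l ω))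
            (⊤ : MeasurableSpace (Fin n × (Fin n → ℕ)))] (fun ω => y (k + 1) i ω) ∧
        Measurable[⨆ l ∈ Finset.range (k + 1),
          MeasurableSpace.comap (fun ω => (ihat l ω, d l ω))
            (⊤ : MeasurableSpace (Fin n × (Fin n → ℕ)))] (fun ω => xhat (k + 1) i ω))
    -- integrability of the relevant squared norms
    (hint1 : ∀ k i, Integrable (fun ω => ‖xbar k ω - x k i ω‖ ^ 2) μ)
    (hint2 : ∀ t, Integrable
      (fun ω => ‖x (t + 1) (ihat t ω) ω - x t (ihat t ω) ω‖ ^ 2) μ)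
    (D : ℝ)
    (hD : D = (8 * α ^ 2 * (1 + L ^ 2 * η ^ 2) * ((τ : ℝ) ^ 2 + 2 * T * n * phat)
        + 8 * (n : ℝ) ^ 2 * (1 + L ^ 2 * η ^ 2 + T * α ^ 2 * phat))
        / (phat * α ^ 2 * (n : ℝ) ^ 2)) :
    ∀ k : ℕ, τ ≤ k →
      ∑ i, ∫ ω, ‖xbar k ω - x k i ω‖ ^ 2 ∂μ ≤
        D * ∑ t ∈ Finset.Icc (k - τ) (k + T),
            ∫ ω, ‖x (t + 1) (ihat t ω) ω - x t (ihat t ω) ω‖ ^ 2 ∂μ := by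
  intro k _
  have hprox : LipschitzWith 1 proxg := lipschitzWith_one_of_isMinOn_add_sq_norm_sub hgconv
    (one_div_pos.2 (mul_pos two_pos hη)) (fun _ ↦ Set.mem_univ _) hproxg
  have hpath := ae_isAsyncDRPath (G := fun i ↦ gradient (f i)) (P := proxg) hdelay_active hy hxhat
    (by simpa only [Fintype.card_fin] using hxbar) (fun k ↦ (hstep k).mono fun _ h ↦ h.1.1)
    (fun k ↦ (hstep k).mono fun _ h i hi ↦ (h.2 i hi).2.1)
  have hpast := fun l i ↦ aestronglyMeasurable_past_sq_norm_sub (v := (x · i)) (hint1 0 i).1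
    (fun j ↦ (hadapt j).1) (fun j ↦ ((hadapt j).2 i).1) l
  have hwindow := fun i ↦ exists_mem_Icc_ae_le_condExp_past (B := {q | q.1 = i}) hξmeas (hact i k)
  have hactive (l : ℕ) (i : Fin n) : MeasurableSet {ω | ihat l ω = i} :=
    hξmeas l (t := {q | q.1 = i}) trivial
  have hbound := asyncFedDR_residual_bound_general hlip hprox hα.ne' hphat (past_le hξmeas)
    hactive hpath hpast hwindow hint1 hint2
  rw [Fintype.card_fin] at hbound
  refine hbound.trans ?_
  rw [hD]
  gcongr
  · exact asyncFedDR_general_const_le_const hα.ne' hphat (Nat.cast_pos.2 hn) τ T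
  · exact Nat.sub_le k τ
end
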